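/- arXiv:2401.12339 — 2 statements merged into one kernel-verified Lean document; each statement's English description precedes it below -/
import Mathlib

section
/- If G is a crown-free (C_{13}-free) linear 3-uniform hypergraph on n vertices and s is the number of vertices of G with degree at least 6, then the number of edges of G is at most 3(n - s)/2. -/
open Finset

/-- A linear `r`-uniform hypergraph: every edge has `r` vertices and
any two distinct edges intersect in at most one vertex. -/
def IsLinear {V : Type*} [DecidableEq V] (r : ℕ) (E : Finset (Finset V)) : Prop :=
  (∀ e ∈ E, e.card = r) ∧ ∀ e ∈ E, ∀ f ∈ E, e ≠ f → (e ∩ f).card ≤ 1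

/-- The degree of a vertex: the number of edges containing it. -/
def degree {V : Type*} [DecidableEq V] (E : Finset (Finset V)) (v : V) : ℕ :=
  (E.filter (fun e => v ∈ e)).card

/-- `E` contains a copy of the `r`-crown `C_{1r}`: `r` pairwise disjoint edges
together with one edge meeting each of them in exactly one vertex. -/
def HasCrown {V : Type*} [DecidableEq V] (r : ℕ) (E : Finset (Finset V)) : Prop :=
  ∃ e ∈ E, ∃ f : Fin r → Finset V,
    (∀ i, f i ∈ E) ∧ (∀ i, f i ≠ e) ∧
    (∀ i j, i ≠ j → f i ∩ f j = ∅) ∧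
    (∀ i, (e ∩ f i).card = 1)

/-- `E` contains a copy of `C*`: `r-2` edges pairwise meeting exactly in a common
vertex `v`, two further edges disjoint from each other and from all the others,
and one edge meeting each of the `r` edges in exactly one vertex, avoiding `v`. -/
def HasCStar {V : Type*} [DecidableEq V] (r : ℕ) (E : Finset (Finset V)) : Prop :=
  ∃ v : V, ∃ e ∈ E, ∃ f : Fin r → Finset V,
    (∀ i, f i ∈ E) ∧ (∀ i, f i ≠ e) ∧
    (∀ i : Fin r, (i : ℕ) < r - 2 → v ∈ f i) ∧
    (∀ i j : Fin r, (i : ℕ) < r - 2 → (j : ℕ) < r - 2 → i ≠ j → f i ∩ f j = {v}) ∧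
    (∀ i j : Fin r, r - 2 ≤ (i : ℕ) → i ≠ j → f i ∩ f j = ∅) ∧
    (∀ i, (e ∩ f i).card = 1) ∧ v ∉ e

theorem IsLinear.edge_eq {V : Type*} [DecidableEq V] {r : ℕ} {E : Finset (Finset V)}
    (hlin : IsLinear r E) {e f : Finset V} (he : e ∈ E) (hf : f ∈ E) {x y : V} (hxy : x ≠ y)
    (hxe : x ∈ e) (hye : y ∈ e) (hxf : x ∈ f) (hyf : y ∈ f) : e = f := by
  by_contra hne
  have h1 := hlin.2 e he f hf hne
  have h2 := Finset.card_le_one.1 h1 x (by simp [hxe, hxf]) y (by simp [hye, hyf])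
  exact hxy h2

theorem IsLinear.inter_card_eq_one {V : Type*} [DecidableEq V] {r : ℕ} {E : Finset (Finset V)}
    (hlin : IsLinear r E) {e f : Finset V} (he : e ∈ E) (hf : f ∈ E) (hne : e ≠ f) {x : V}
    (hxe : x ∈ e) (hxf : x ∈ f) : (e ∩ f).card = 1 := by
  have h1 := hlin.2 e he f hf hne
  have h2 : 0 < (e ∩ f).card := Finset.card_pos.2 ⟨x, by simp [hxe, hxf]⟩
  omega

/-- In a crown-free linear 3-graph, three edges through the three vertices of an edge are not
pairwise disjoint. -/
theorem not_disjoint_of_crown_free {V : Type*} [DecidableEq V] {E : Finset (Finset V)}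
    (hlin : IsLinear 3 E) (hfree : ¬ HasCrown 3 E) {a b c : V} (he : {a, b, c} ∈ E)
    {f g h : Finset V} (hf : f ∈ E) (hg : g ∈ E) (hh : h ∈ E)
    (haf : a ∈ f) (hbg : b ∈ g) (hch : c ∈ h)
    (hfg : Disjoint f g) (hfh : Disjoint f h) (hgh : Disjoint g h) : False := by
  have hfe : f ≠ {a, b, c} := by
    rintro rfl
    exact Finset.disjoint_left.1 hfg (by simp : b ∈ _) hbg
  have hge : g ≠ {a, b, c} := by
    rintro rfl
    exact Finset.disjoint_left.1 hgh (by simp : c ∈ _) hch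
  have hhe : h ≠ {a, b, c} := by
    rintro rfl
    exact Finset.disjoint_left.1 hfh haf (by simp : a ∈ _)
  refine hfree ⟨_, he, ![f, g, h], ?_, ?_, ?_, ?_⟩
  · intro i; fin_cases i <;> simp [hf, hg, hh]
  · intro i; fin_cases i <;> simp [hfe, hge, hhe]
  · intro i j hij
    fin_cases i <;> fin_cases j <;>
      simp_all [← Finset.disjoint_iff_inter_eq_empty, disjoint_comm]
  · intro i
    fin_cases i
    · exact hlin.inter_card_eq_one he hf hfe.symm (x := a) (by simp) haf
    · exact hlin.inter_card_eq_one he hg hge.symm (x := b) (by simp) hbg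
    · exact hlin.inter_card_eq_one he hh hhe.symm (x := c) (by simp) hch

/-- At most `S.card` edges through a vertex outside `S` meet `S`. -/
theorem IsLinear.card_filter_not_disjoint_le {V : Type*} [DecidableEq V] {r : ℕ}
    {E : Finset (Finset V)} (hlin : IsLinear r E) {x : V} {S : Finset V} (hx : x ∉ S) :
    (E.filter (fun e => x ∈ e ∧ ¬ Disjoint e S)).card ≤ S.card := by
  have hsub : E.filter (fun e => x ∈ e ∧ ¬ Disjoint e S) ⊆
      S.biUnion (fun y => E.filter (fun e => x ∈ e ∧ y ∈ e)) := by
    intro e he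
    simp only [Finset.mem_filter, Finset.not_disjoint_iff] at he
    obtain ⟨heE, hxe, y, hye, hyS⟩ := he
    simp only [Finset.mem_biUnion, Finset.mem_filter]
    exact ⟨y, hyS, heE, hxe, hye⟩
  refine (Finset.card_le_card hsub).trans ?_
  refine (Finset.card_biUnion_le_card_mul _ _ 1 fun y hy => ?_).trans (by simp)
  refine Finset.card_le_one.2 fun e he f hf => ?_
  simp only [Finset.mem_filter] at he hf
  exact hlin.edge_eq he.1 hf.1 (fun h => hx (h ▸ hy) : x ≠ y) he.2.1 he.2.2 hf.2.1 hf.2.2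

theorem IsLinear.exists_edge_disjoint {V : Type*} [DecidableEq V] {r : ℕ}
    {E : Finset (Finset V)} (hlin : IsLinear r E) {x : V} {S : Finset V} (hx : x ∉ S)
    (e : Finset V) (hd : S.card + 2 ≤ degree E x) :
    ∃ f ∈ E, x ∈ f ∧ f ≠ e ∧ Disjoint f S := by
  by_contra! hcon
  have hsub : E.filter (fun f => x ∈ f) ⊆
      insert e (E.filter (fun f => x ∈ f ∧ ¬ Disjoint f S)) := by
    intro f hf
    simp only [Finset.mem_filter] at hf
    simp only [Finset.mem_insert, Finset.mem_filter]
    by_cases hfe : f = e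
    · exact Or.inl hfe
    · exact Or.inr ⟨hf.1, hf.2, hcon f hf.1 hf.2 hfe⟩
  have h1 := Finset.card_le_card hsub
  have h2 := Finset.card_insert_le e (E.filter (fun f => x ∈ f ∧ ¬ Disjoint f S))
  have h3 := hlin.card_filter_not_disjoint_le hx
  unfold degree at hd
  omega

/-- Two edges through different vertices of an edge `e`, other than `e`, are disjoint as soon as
one of them avoids the rest of the other. -/
theorem IsLinear.disjoint_of_disjoint_erase {V : Type*} [DecidableEq V] {r : ℕ}
    {E : Finset (Finset V)} (hlin : IsLinear r E) {e f g : Finset V} (he : e ∈ E) (hf : f ∈ E)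
    (hfe : f ≠ e) {x y : V} (hxy : x ≠ y) (hxe : x ∈ e) (hye : y ∈ e) (hxf : x ∈ f)
    (h : Disjoint f (g.erase y)) : Disjoint f g := by
  rw [Finset.disjoint_left] at h ⊢
  intro z hzf hzg
  have hzy : z ≠ y := by
    rintro rfl
    exact hfe (hlin.edge_eq hf he hxy hxf hzf hxe hye)
  exact h hzf (Finset.mem_erase.2 ⟨hzy, hzg⟩)

theorem IsLinear.notMem_of_ne {V : Type*} [DecidableEq V] {r : ℕ} {E : Finset (Finset V)}
    (hlin : IsLinear r E) {e f : Finset V} (he : e ∈ E) (hf : f ∈ E) (hfe : f ≠ e) {x y : V}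
    (hxy : x ≠ y) (hxe : x ∈ e) (hye : y ∈ e) (hxf : x ∈ f) : y ∉ f :=
  fun hyf => hfe (hlin.edge_eq hf he hxy hxf hyf hxe hye)

theorem false_of_degrees_of_crown_free {V : Type*} [DecidableEq V] {E : Finset (Finset V)}
    (hlin : IsLinear 3 E) (hfree : ¬ HasCrown 3 E) {a b c : V} (he : {a, b, c} ∈ E)
    (hab : a ≠ b) (hac : a ≠ c) (hbc : b ≠ c)
    (ha : 6 ≤ degree E a) (hb : 4 ≤ degree E b) (hc : 2 ≤ degree E c) : False := by
  obtain ⟨h, hh, hch, hhe, -⟩ := hlin.exists_edge_disjoint (x := c) (S := ∅) (by simp)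
    {a, b, c} (by simpa using hc)
  have hah : a ∉ h := hlin.notMem_of_ne he hh hhe hac.symm (by simp) (by simp) hch
  have hbh : b ∉ h := hlin.notMem_of_ne he hh hhe hbc.symm (by simp) (by simp) hch
  have hcard : (h.erase c).card = 2 := by
    rw [Finset.card_erase_of_mem hch, hlin.1 h hh]
  obtain ⟨g, hg, hbg, hge, hgh⟩ := hlin.exists_edge_disjoint (x := b) (S := h.erase c)
    (by simp [hbh]) {a, b, c} (by omega)
  have hag : a ∉ g := hlin.notMem_of_ne he hg hge hab.symm (by simp) (by simp) hbg
  have hcard' : (g.erase b).card = 2 := by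
    rw [Finset.card_erase_of_mem hbg, hlin.1 g hg]
  have hunion := Finset.card_union_le (g.erase b) (h.erase c)
  obtain ⟨f, hf, haf, hfe, hfS⟩ := hlin.exists_edge_disjoint (x := a)
    (S := g.erase b ∪ h.erase c) (by simp [hah, hag]) {a, b, c} (by omega)
  rw [Finset.disjoint_union_right] at hfS
  exact not_disjoint_of_crown_free hlin hfree he hf hg hh haf hbg hch
    (hlin.disjoint_of_disjoint_erase he hf hfe hab (by simp) (by simp) haf hfS.1)
    (hlin.disjoint_of_disjoint_erase he hf hfe hac (by simp) (by simp) haf hfS.2)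
    (hlin.disjoint_of_disjoint_erase he hg hge hbc (by simp) (by simp) hbg hgh)

/-- Two Fano planes glued along the edge `{a, b, c}`, with the edge `{c, v₀, v₂}` possibly
missing. -/
structure GluedFano {V : Type*} [DecidableEq V] (E : Finset (Finset V))
    (a b c v₀ v₁ v₂ v₃ w₀ w₁ w₂ w₃ : V) : Prop where
  nodup : [a, b, c, v₀, v₁, v₂, v₃, w₀, w₁, w₂, w₃].Nodup
  av₀₁ : {a, v₀, v₁} ∈ E
  av₂₃ : {a, v₂, v₃} ∈ E
  bv₀₃ : {b, v₀, v₃} ∈ E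
  bv₁₂ : {b, v₁, v₂} ∈ E
  cv₁₃ : {c, v₁, v₃} ∈ E
  aw₀₁ : {a, w₀, w₁} ∈ E
  aw₂₃ : {a, w₂, w₃} ∈ E
  bw₀₂ : {b, w₀, w₂} ∈ E
  bw₁₃ : {b, w₁, w₃} ∈ E
  cw₀₃ : {c, w₀, w₃} ∈ E
  cw₁₂ : {c, w₁, w₂} ∈ E

theorem GluedFano.notMem_w₀ {V : Type*} [DecidableEq V] {E : Finset (Finset V)}
    (hlin : IsLinear 3 E) (hfree : ¬ HasCrown 3 E) {a b c v₀ v₁ v₂ v₃ w₀ w₁ w₂ w₃ : V}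
    (F : GluedFano E a b c v₀ v₁ v₂ v₃ w₀ w₁ w₂ w₃) {k : Finset V} (hk : k ∈ E)
    (hak : a ∉ k) (hbk : b ∉ k) (hck : c ∉ k) : w₀ ∉ k := by
  intro hw
  have hn := F.nodup
  simp only [List.nodup_cons, List.mem_cons, List.not_mem_nil, not_or, or_false] at hn
  have avoid : ∀ {z x y : V}, {z, x, y} ∈ E → z ∉ k → x ≠ y → x ∈ k → y ∉ k := by
    intro z x y hE hz hxy hx hy
    have := hlin.edge_eq hk hE hxy hx hy (by simp) (by simp)
    exact hz (by simp [this])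
  have k1 : w₁ ∉ k := avoid F.aw₀₁ hak (by grind) hw
  have k2 : w₂ ∉ k := avoid F.bw₀₂ hbk (by grind) hw
  have k3 : w₃ ∉ k := avoid F.cw₀₃ hck (by grind) hw
  by_cases h1 : v₁ ∈ k
  · have k4 : v₂ ∉ k := avoid F.bv₁₂ hbk (by grind) h1
    have k5 : v₃ ∉ k := avoid F.cv₁₃ hck (by grind) h1
    refine not_disjoint_of_crown_free hlin hfree F.aw₀₁ F.av₂₃ hk F.bw₁₃ (by simp) hw (by simp)
      ?_ ?_ ?_ <;> simp <;> grind
  by_cases h3 : v₃ ∈ k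
  · have k4 : v₀ ∉ k := avoid (by simpa [Finset.pair_comm] using F.bv₀₃) hbk (by grind) h3
    refine not_disjoint_of_crown_free hlin hfree F.aw₀₁ F.av₀₁ hk F.bw₁₃ (by simp) hw (by simp)
      ?_ ?_ ?_ <;> simp <;> grind
  refine not_disjoint_of_crown_free hlin hfree F.cw₀₃ F.cv₁₃ hk F.bw₁₃ (by simp) hw (by simp)
      ?_ ?_ ?_ <;> simp <;> grind

/-- An edge avoiding `a`, `b` and `c` avoids the whole configuration. -/
theorem GluedFano.notMem {V : Type*} [DecidableEq V] {E : Finset (Finset V)}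
    (hlin : IsLinear 3 E) (hfree : ¬ HasCrown 3 E) {a b c v₀ v₁ v₂ v₃ w₀ w₁ w₂ w₃ : V}
    (F : GluedFano E a b c v₀ v₁ v₂ v₃ w₀ w₁ w₂ w₃) {k : Finset V} (hk : k ∈ E)
    (hak : a ∉ k) (hbk : b ∉ k) (hck : c ∉ k) {p : V}
    (hp : p ∈ ({v₀, v₁, v₂, v₃, w₀, w₁, w₂, w₃} : Finset V)) : p ∉ k := by
  have hn := F.nodup
  simp only [List.nodup_cons, List.mem_cons, List.not_mem_nil, not_or, or_false] at hn
  have avoid : ∀ {z x y : V}, {z, x, y} ∈ E → z ∉ k → x ≠ y → x ∈ k → y ∉ k := by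
    intro z x y hE hz hxy hx hy
    have := hlin.edge_eq hk hE hxy hx hy (by simp) (by simp)
    exact hz (by simp [this])
  have swap : ∀ {z x y : V}, {z, x, y} ∈ E → {z, y, x} ∈ E := by
    intro z x y h
    rwa [Finset.pair_comm]
  obtain ⟨hnd, e1, e2, e3, e4, e5, e6, e7, e8, e9, e10, e11⟩ := F
  have F1 : GluedFano E a b c v₀ v₁ v₂ v₃ w₁ w₀ w₃ w₂ :=
    ⟨by simp; grind, e1, e2, e3, e4, e5, swap e6, swap e7, e9, e8, e11, e10⟩
  have F2 : GluedFano E a b c v₀ v₁ v₂ v₃ w₂ w₃ w₀ w₁ :=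
    ⟨by simp; grind, e1, e2, e3, e4, e5, e7, e6, swap e8, swap e9, swap e11, swap e10⟩
  have F3 : GluedFano E a b c v₀ v₁ v₂ v₃ w₃ w₂ w₁ w₀ :=
    ⟨by simp; grind, e1, e2, e3, e4, e5, swap e7, swap e6, swap e9, swap e8, swap e10, swap e11⟩
  have k0 := GluedFano.notMem_w₀ hlin hfree
    ⟨hnd, e1, e2, e3, e4, e5, e6, e7, e8, e9, e10, e11⟩ hk hak hbk hck
  have k1 := F1.notMem_w₀ hlin hfree hk hak hbk hck
  have k2 := F2.notMem_w₀ hlin hfree hk hak hbk hck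
  have k3 := F3.notMem_w₀ hlin hfree hk hak hbk hck
  have hv1 : v₁ ∉ k := by
    intro h
    have := avoid e5 hck (by grind) h
    have := avoid (swap e1) hak (by grind) h
    refine not_disjoint_of_crown_free hlin hfree e1 e6 e3 hk (by simp) (by simp) h
      ?_ ?_ ?_ <;> simp <;> grind
  have hv3 : v₃ ∉ k := by
    intro h
    have := avoid (swap e2) hak (by grind) h
    refine not_disjoint_of_crown_free hlin hfree e2 e6 e4 hk (by simp) (by simp) h
      ?_ ?_ ?_ <;> simp <;> grind
  have hv0 : v₀ ∉ k := by
    intro h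
    refine not_disjoint_of_crown_free hlin hfree e1 e6 hk e5 (by simp) h (by simp)
      ?_ ?_ ?_ <;> simp <;> grind
  have hv2 : v₂ ∉ k := by
    intro h
    refine not_disjoint_of_crown_free hlin hfree e2 e6 hk e5 (by simp) h (by simp)
      ?_ ?_ ?_ <;> simp <;> grind
  simp only [Finset.mem_insert, Finset.mem_singleton] at hp
  rcases hp with rfl | rfl | rfl | rfl | rfl | rfl | rfl | rfl <;> assumption

theorem gluedFano_of_links {V : Type*} [DecidableEq V] {E : Finset (Finset V)}
    (hlin : IsLinear 3 E) (hfree : ¬ HasCrown 3 E) {a b c v₀ v₁ v₂ v₃ w₀ w₁ w₂ w₃ : V}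
    (he : {a, b, c} ∈ E) (hnodup : [a, b, c, v₀, v₁, v₂, v₃, w₀, w₁, w₂, w₃].Nodup)
    (av₀₁ : {a, v₀, v₁} ∈ E) (av₂₃ : {a, v₂, v₃} ∈ E)
    (bv₀₃ : {b, v₀, v₃} ∈ E) (bv₁₂ : {b, v₁, v₂} ∈ E)
    (aw₀₁ : {a, w₀, w₁} ∈ E) (aw₂₃ : {a, w₂, w₃} ∈ E)
    (bw₀₂ : {b, w₀, w₂} ∈ E) (bw₁₃ : {b, w₁, w₃} ∈ E)
    {H : Finset (Finset V)} (hHcard : H.card = 3) (hHE : H ⊆ E)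
    (hH : ∀ h ∈ H, ∃ x y, h = {c, x, y} ∧ x ≠ y ∧
      x ∈ ({v₁, v₃, w₀, w₁, w₂, w₃} : Finset V) ∧ y ∈ ({v₁, v₃, w₀, w₁, w₂, w₃} : Finset V)) :
    GluedFano E a b c v₀ v₁ v₂ v₃ w₀ w₁ w₂ w₃ := by
  have hn := hnodup
  simp only [List.nodup_cons, List.mem_cons, List.not_mem_nil, not_or, or_false] at hn
  have hHT : H ⊆ {{c, v₁, v₃}, {c, w₀, w₃}, {c, w₁, w₂}} := by
    intro h hh
    obtain ⟨x, y, rfl, hxy, hx, hy⟩ := hH h hh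
    have meets : ∀ {p q r s : V}, {a, p, q} ∈ E → {b, r, s} ∈ E →
        Disjoint ({a, p, q} : Finset V) {b, r, s} →
        ¬ (Disjoint ({a, p, q} : Finset V) {c, x, y} ∧
          Disjoint ({b, r, s} : Finset V) {c, x, y}) :=
      fun hf hg hd ⟨h1, h2⟩ => not_disjoint_of_crown_free hlin hfree he hf hg (hHE hh)
        (by simp) (by simp) (by simp) hd h1 h2
    have m1 := meets av₀₁ bw₀₂ (by simp; grind)
    have m2 := meets av₀₁ bw₁₃ (by simp; grind)
    have m3 := meets av₂₃ bw₀₂ (by simp; grind)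
    have m4 := meets av₂₃ bw₁₃ (by simp; grind)
    have m5 := meets aw₀₁ bv₀₃ (by simp; grind)
    have m6 := meets aw₀₁ bv₁₂ (by simp; grind)
    have m7 := meets aw₂₃ bv₀₃ (by simp; grind)
    have m8 := meets aw₂₃ bv₁₂ (by simp; grind)
    clear meets hH
    simp only [Finset.mem_insert, Finset.mem_singleton] at hx hy ⊢
    simp only [Finset.disjoint_insert_left, Finset.disjoint_singleton_left, Finset.mem_insert,
      Finset.mem_singleton, not_or] at m1 m2 m3 m4 m5 m6 m7 m8
    rcases hx with rfl | rfl | rfl | rfl | rfl | rfl <;>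
    rcases hy with rfl | rfl | rfl | rfl | rfl | rfl <;>
    first
    | exact absurd rfl hxy
    | simp
    | (simp [Finset.pair_comm]; done)
    | (exfalso; grind)
  have hT : ({{c, v₁, v₃}, {c, w₀, w₃}, {c, w₁, w₂}} : Finset (Finset V)).card ≤ H.card := by
    rw [hHcard]; exact Finset.card_le_three
  have hHeq := Finset.eq_of_subset_of_card_le hHT hT
  exact ⟨hnodup, av₀₁, av₂₃, bv₀₃, bv₁₂, hHE (by simp [hHeq]), aw₀₁, aw₂₃, bw₀₂, bw₁₃,
    hHE (by simp [hHeq]), hHE (by simp [hHeq])⟩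

theorem Finset.exists_eq_insert_pair {V : Type*} [DecidableEq V] {f : Finset V}
    (hf : f.card = 3) {a : V} (ha : a ∈ f) :
    ∃ x y, f = {a, x, y} ∧ a ≠ x ∧ a ≠ y ∧ x ≠ y := by
  have hcard : (f.erase a).card = 2 := by rw [Finset.card_erase_of_mem ha, hf]
  obtain ⟨x, y, hxy, hfe⟩ := Finset.card_eq_two.1 hcard
  have hx : x ∈ f.erase a := by simp [hfe]
  have hy : y ∈ f.erase a := by simp [hfe]
  refine ⟨x, y, ?_, (Finset.ne_of_mem_erase hx).symm, (Finset.ne_of_mem_erase hy).symm, hxy⟩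
  rw [← hfe, Finset.insert_erase ha]

theorem Finset.eq_triple_of_mem {V : Type*} [DecidableEq V] {f : Finset V}
    (hf : f.card = 3) {x y z : V} (hx : x ∈ f) (hy : y ∈ f) (hz : z ∈ f)
    (hxy : x ≠ y) (hxz : x ≠ z) (hyz : y ≠ z) : f = {x, y, z} := by
  symm
  apply Finset.eq_of_subset_of_card_le
  · simp [Finset.insert_subset_iff, hx, hy, hz]
  · rw [hf, Finset.card_eq_three.2 ⟨x, y, z, hxy, hxz, hyz, rfl⟩]

/-- If at least four edges through `a` all meet a set of at most six vertices not containing `a`,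
then at least two of them meet it in one vertex only. -/
theorem one_lt_card_filter_inter_card_eq_one {V : Type*} [DecidableEq V] {a : V}
    {F : Finset (Finset V)} {U : Finset V} (haU : a ∉ U) (hU : U.card ≤ 6) (hF : 4 ≤ F.card)
    (hdisj : ∀ f ∈ F, ∀ g ∈ F, f ≠ g → ∀ x ∈ f, x ∈ g → x = a)
    (hmeet : ∀ f ∈ F, 1 ≤ (f ∩ U).card) :
    1 < (F.filter (fun f => (f ∩ U).card = 1)).card := by
  have hsum : ∑ f ∈ F, (f ∩ U).card ≤ U.card := by
    rw [← Finset.card_biUnion]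
    · apply Finset.card_le_card
      intro x hx
      simp only [Finset.mem_biUnion, Finset.mem_inter] at hx
      obtain ⟨f, -, -, hx⟩ := hx
      exact hx
    · intro f hf g hg hfg
      rw [Function.onFun, Finset.disjoint_left]
      intro x hxf hxg
      simp only [Finset.mem_inter] at hxf hxg
      exact haU (hdisj f hf g hg hfg x hxf.1 hxg.1 ▸ hxf.2)
  have hlow : ∑ f ∈ F, 2 ≤ ∑ f ∈ F, ((f ∩ U).card + if (f ∩ U).card = 1 then 1 else 0) := by
    apply Finset.sum_le_sum
    intro f hf
    have := hmeet f hf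
    split_ifs <;> omega
  rw [Finset.sum_add_distrib, ← Finset.card_filter] at hlow
  simp only [Finset.sum_const, smul_eq_mul] at hlow
  omega

theorem gluedFano_or_gluedFano {V : Type*} [DecidableEq V] {E : Finset (Finset V)}
    (hlin : IsLinear 3 E) (hfree : ¬ HasCrown 3 E)
    {a b c v₀ v₁ v₂ v₃ w₀ w₁ w₂ w₃ x₀ x₁ x₂ x₃ : V} {U : Finset V}
    (he : {a, b, c} ∈ E) (hnodup : [a, b, c, v₀, v₁, v₂, v₃, w₀, w₁, w₂, w₃].Nodup)
    (hx : [v₁, v₃, x₀, x₁, x₂, x₃].Nodup) (hU : U.card ≤ 6)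
    (hU' : {v₁, v₃, w₀, w₁, w₂, w₃} ⊆ U) (hxU : {x₀, x₁, x₂, x₃} ⊆ U)
    (av₀₁ : {a, v₀, v₁} ∈ E) (av₂₃ : {a, v₂, v₃} ∈ E)
    (bv₀₃ : {b, v₀, v₃} ∈ E) (bv₁₂ : {b, v₁, v₂} ∈ E)
    (aw₀₁ : {a, w₀, w₁} ∈ E) (aw₂₃ : {a, w₂, w₃} ∈ E)
    (bx₀₁ : {b, x₀, x₁} ∈ E) (bx₂₃ : {b, x₂, x₃} ∈ E)
    {H : Finset (Finset V)} (hHcard : H.card = 3) (hHE : H ⊆ E)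
    (hH : ∀ h ∈ H, ∃ x y, h = {c, x, y} ∧ x ≠ y ∧ x ∈ U ∧ y ∈ U) :
    U = {v₁, v₃, w₀, w₁, w₂, w₃} ∧
    (GluedFano E a b c v₀ v₁ v₂ v₃ w₀ w₁ w₂ w₃ ∨
      GluedFano E a b c v₀ v₁ v₂ v₃ w₀ w₁ w₃ w₂) := by
  have hn := hnodup
  simp only [List.nodup_cons, List.mem_cons, List.not_mem_nil, not_or, or_false] at hn hx
  have hUeq : {v₁, v₃, w₀, w₁, w₂, w₃} = U := by
    refine Finset.eq_of_subset_of_card_le hU' (hU.trans (le_of_eq ?_))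
    have : [v₁, v₃, w₀, w₁, w₂, w₃].Nodup := by simp; grind
    simpa using (List.toFinset_card_of_nodup this).symm
  refine ⟨hUeq.symm, ?_⟩
  have split : ∀ {x y : V}, {b, x, y} ∈ E → x ≠ y → x ∈ U → y ∈ U → x ≠ v₁ → x ≠ v₃ → y ≠ v₁ →
      y ≠ v₃ → (x = w₀ ∨ x = w₁) ∧ (y = w₂ ∨ y = w₃) ∨ (y = w₀ ∨ y = w₁) ∧ (x = w₂ ∨ x = w₃) := by
    intro x y hE hxy hxU hyU h1 h2 h3 h4
    have lin : ∀ {p q : V}, {a, p, q} ∈ E → b ≠ a → b ≠ p → b ≠ q →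
        ¬ ((x = p ∨ x = q) ∧ (y = p ∨ y = q)) := by
      rintro p q hE' hba hbp hbq ⟨hxm, hym⟩
      have heq := hlin.edge_eq hE hE' hxy (by simp) (by simp) (by simp [hxm]) (by simp [hym])
      have hb : b ∈ ({a, p, q} : Finset V) := by rw [← heq]; simp
      simp [hba, hbp, hbq] at hb
    have l1 := lin aw₀₁ (by grind) (by grind) (by grind)
    have l2 := lin aw₂₃ (by grind) (by grind) (by grind)
    clear lin
    simp only [← hUeq, Finset.mem_insert, Finset.mem_singleton] at hxU hyU
    grind
  have s1 := split bx₀₁ (by grind) (hxU (by simp)) (hxU (by simp)) (by grind) (by grind)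
    (by grind) (by grind)
  have s2 := split bx₂₃ (by grind) (hxU (by simp)) (hxU (by simp)) (by grind) (by grind)
    (by grind) (by grind)
  have hbw : ({b, w₀, w₂} : Finset V) ∈ E ∧ ({b, w₁, w₃} : Finset V) ∈ E ∨
      ({b, w₀, w₃} : Finset V) ∈ E ∧ ({b, w₁, w₂} : Finset V) ∈ E := by
    have bx₁₀ : {b, x₁, x₀} ∈ E := by rwa [Finset.pair_comm]
    have bx₃₂ : {b, x₃, x₂} ∈ E := by rwa [Finset.pair_comm]
    clear split hUeq hU hU' hxU hH hHE
    grind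
  rcases hbw with ⟨h1, h2⟩ | ⟨h1, h2⟩
  · refine Or.inl (gluedFano_of_links hlin hfree he hnodup av₀₁ av₂₃ bv₀₃ bv₁₂ aw₀₁ aw₂₃ h1 h2
      hHcard hHE ?_)
    rwa [hUeq]
  · refine Or.inr (gluedFano_of_links hlin hfree he (by simp; grind) av₀₁ av₂₃ bv₀₃ bv₁₂ aw₀₁
      (by rwa [Finset.pair_comm]) h1 h2 hHcard hHE ?_)
    rwa [Finset.pair_comm w₃ w₂, hUeq]

theorem IsLinear.mono {V : Type*} [DecidableEq V] {r : ℕ} {E F : Finset (Finset V)}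
    (hlin : IsLinear r E) (h : F ⊆ E) : IsLinear r F :=
  ⟨fun e he => hlin.1 e (h he), fun e he f hf => hlin.2 e (h he) f (h hf)⟩

theorem Finset.inter_subset_erase {V : Type*} [DecidableEq V] {a : V} {f U : Finset V}
    (haU : a ∉ U) : f ∩ U ⊆ f.erase a := by
  intro x hx
  rw [Finset.mem_inter] at hx
  exact Finset.mem_erase.2 ⟨fun h => haU (h ▸ hx.2), hx.1⟩

theorem Finset.mem_iff_notMem_of_inter_card_eq_one {V : Type*} [DecidableEq V] {a x y : V}
    {U : Finset V} (haU : a ∉ U) (hxy : x ≠ y) (h : (({a, x, y} : Finset V) ∩ U).card = 1) :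
    x ∈ U ↔ y ∉ U := by
  by_cases hx : x ∈ U <;> by_cases hy : y ∈ U <;>
    simp [Finset.insert_inter_of_mem,
      Finset.insert_inter_of_notMem, Finset.singleton_inter_of_mem,
      Finset.singleton_inter_of_notMem, haU, hx, hy, hxy] at h ⊢

theorem three_le_card_inter_add_card_inter {V : Type*} [DecidableEq V] {E : Finset (Finset V)}
    (hlin : IsLinear 3 E) (hfree : ¬ HasCrown 3 E) {a b c : V} (he : {a, b, c} ∈ E)
    {H : Finset (Finset V)} (hHcard : H.card = 3) (hHE : H ⊆ E) (hcH : ∀ h ∈ H, c ∈ h)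
    {f g : Finset V} (hf : f ∈ E) (hg : g ∈ E) (haf : a ∈ f) (hbg : b ∈ g) (hcf : c ∉ f)
    (hcg : c ∉ g) (hfg : Disjoint f g) :
    3 ≤ (f ∩ H.biUnion (fun h => h.erase c)).card +
      (g ∩ H.biUnion (fun h => h.erase c)).card := by
  have hex : ∀ h ∈ H, ∃ x, x ∈ (f ∪ g) ∩ H.biUnion (fun h => h.erase c) ∧ x ∈ h ∧ x ≠ c := by
    intro h hh
    by_contra! hcon
    have hout : ∀ x ∈ h, x ∉ f ∧ x ∉ g := by
      intro x hxh
      rw [← not_or]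
      intro hx
      have hxc : x ≠ c := by
        rintro rfl
        exact hx.elim hcf hcg
      refine hxc (hcon x ?_ hxh)
      simp only [Finset.mem_inter, Finset.mem_union, Finset.mem_biUnion, Finset.mem_erase]
      exact ⟨hx, h, hh, hxc, hxh⟩
    exact not_disjoint_of_crown_free hlin hfree he hf hg (hHE hh) haf hbg (hcH h hh) hfg
      (Finset.disjoint_right.2 fun x hx => (hout x hx).1)
      (Finset.disjoint_right.2 fun x hx => (hout x hx).2)
  have : Nonempty V := ⟨a⟩
  choose! φ hφU hφh hφc using hex
  have hle : H.card ≤ ((f ∪ g) ∩ H.biUnion (fun h => h.erase c)).card := by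
    refine Finset.card_le_card_of_injOn φ hφU ?_
    intro h hh h' hh' heq
    have hφ' := hφh h' hh'
    rw [← heq] at hφ'
    exact hlin.edge_eq (hHE hh) (hHE hh') (hφc h hh) (hφh h hh) (hcH h hh) hφ' (hcH h' hh')
  rw [hHcard, Finset.union_inter_distrib_right] at hle
  exact hle.trans (Finset.card_union_le _ _)

/-- If there are four further edges through `b`, then every further edge through `a` meets the
neighbourhood of `c`. -/
theorem one_le_card_inter {V : Type*} [DecidableEq V] {E : Finset (Finset V)}
    (hlin : IsLinear 3 E) (hfree : ¬ HasCrown 3 E) {a b c : V} (he : {a, b, c} ∈ E)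
    (hab : a ≠ b) {G H : Finset (Finset V)} (hGcard : G.card = 4) (hGE : G ⊆ E)
    (hbG : ∀ g ∈ G, b ∈ g) (hcG : ∀ g ∈ G, c ∉ g) (hHcard : H.card = 3) (hHE : H ⊆ E)
    (hcH : ∀ h ∈ H, c ∈ h) (hbH : ∀ h ∈ H, b ∉ h)
    {f : Finset V} (hf : f ∈ E) (haf : a ∈ f) (hbf : b ∉ f) (hcf : c ∉ f) :
    1 ≤ (f ∩ H.biUnion (fun h => h.erase c)).card := by
  have hdeg : degree G b = 4 := by
    rw [degree, Finset.filter_true_of_mem hbG, hGcard]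
  have hfcard : (f.erase a).card = 2 := by rw [Finset.card_erase_of_mem haf, hlin.1 f hf]
  obtain ⟨g, hg, hbg, hge, hgf⟩ := (hlin.mono hGE).exists_edge_disjoint (x := b)
    (S := f.erase a) (by simp [hbf]) {a, b, c} (by omega)
  have hgf' : Disjoint g f := hlin.disjoint_of_disjoint_erase he (hGE hg) hge hab.symm
    (by simp) (by simp) hbg hgf
  have h3 := three_le_card_inter_add_card_inter hlin hfree he hHcard hHE hcH hf (hGE hg) haf hbg
    hcf (hcG g hg) hgf'.symm
  have h2 : (g ∩ H.biUnion (fun h => h.erase c)).card ≤ (g.erase b).card :=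
    Finset.card_le_card (Finset.inter_subset_erase (by simp; grind))
  rw [Finset.card_erase_of_mem hbg, hlin.1 g (hGE hg)] at h2
  omega

theorem exists_two_others {α : Type*} [DecidableEq α] {F : Finset α} (hF : F.card = 4) {x y : α} :
    ∃ z ∈ F, ∃ t ∈ F, z ≠ t ∧ z ≠ x ∧ z ≠ y ∧ t ≠ x ∧ t ≠ y := by
  have h : 1 < (F \ {x, y}).card := by
    have h1 := Finset.le_card_sdiff {x, y} F
    have h2 : ({x, y} : Finset α).card ≤ 2 := Finset.card_le_two
    omega
  obtain ⟨z, hz, t, ht, hzt⟩ := Finset.one_lt_card.1 h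
  simp only [Finset.mem_sdiff, Finset.mem_insert, Finset.mem_singleton, not_or] at hz ht
  exact ⟨z, hz.1, t, ht.1, hzt, hz.2.1, hz.2.2, ht.2.1, ht.2.2⟩

theorem exists_gluedFano {V : Type*} [DecidableEq V] {E : Finset (Finset V)}
    (hlin : IsLinear 3 E) (hfree : ¬ HasCrown 3 E) {a b c : V} (he : {a, b, c} ∈ E)
    (hab : a ≠ b) (hac : a ≠ c) (hbc : b ≠ c) {F G H : Finset (Finset V)}
    (hFcard : F.card = 4) (hF : ∀ f ∈ F, f ∈ E ∧ a ∈ f ∧ f ≠ {a, b, c})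
    (hGcard : G.card = 4) (hG : ∀ g ∈ G, g ∈ E ∧ b ∈ g ∧ g ≠ {a, b, c})
    (hHcard : H.card = 3) (hH : ∀ h ∈ H, h ∈ E ∧ c ∈ h ∧ h ≠ {a, b, c}) :
    ∃ v₀ v₁ v₂ v₃ w₀ w₁ w₂ w₃, GluedFano E a b c v₀ v₁ v₂ v₃ w₀ w₁ w₂ w₃ ∧
      (∀ f ∈ F, ∀ p ∈ f, p ≠ a → p ∈ ({v₀, v₁, v₂, v₃, w₀, w₁, w₂, w₃} : Finset V)) ∧
      (∀ h ∈ H, ∀ p ∈ h, p ≠ c → p ∈ ({v₀, v₁, v₂, v₃, w₀, w₁, w₂, w₃} : Finset V)) := by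
  have hFE : F ⊆ E := fun f hf => (hF f hf).1
  have hGE : G ⊆ E := fun f hf => (hG f hf).1
  have hHE : H ⊆ E := fun f hf => (hH f hf).1
  have hbF : ∀ f ∈ F, b ∉ f := fun f hf =>
    hlin.notMem_of_ne he (hFE hf) (hF f hf).2.2 hab (by simp) (by simp) (hF f hf).2.1
  have hcF : ∀ f ∈ F, c ∉ f := fun f hf =>
    hlin.notMem_of_ne he (hFE hf) (hF f hf).2.2 hac (by simp) (by simp) (hF f hf).2.1
  have haG : ∀ f ∈ G, a ∉ f := fun f hf =>
    hlin.notMem_of_ne he (hGE hf) (hG f hf).2.2 hab.symm (by simp) (by simp) (hG f hf).2.1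
  have hcG : ∀ f ∈ G, c ∉ f := fun f hf =>
    hlin.notMem_of_ne he (hGE hf) (hG f hf).2.2 hbc (by simp) (by simp) (hG f hf).2.1
  have haH : ∀ f ∈ H, a ∉ f := fun f hf =>
    hlin.notMem_of_ne he (hHE hf) (hH f hf).2.2 hac.symm (by simp) (by simp) (hH f hf).2.1
  have hbH : ∀ f ∈ H, b ∉ f := fun f hf =>
    hlin.notMem_of_ne he (hHE hf) (hH f hf).2.2 hbc.symm (by simp) (by simp) (hH f hf).2.1
  have hFdisj : ∀ f ∈ F, ∀ g ∈ F, f ≠ g → ∀ x ∈ f, x ∈ g → x = a := by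
    intro f hf g hg hfg x hxf hxg
    by_contra hxa
    exact hfg (hlin.edge_eq (hFE hf) (hFE hg) hxa hxf (hF f hf).2.1 hxg (hF g hg).2.1)
  have hGdisj : ∀ f ∈ G, ∀ g ∈ G, f ≠ g → ∀ x ∈ f, x ∈ g → x = b := by
    intro f hf g hg hfg x hxf hxg
    by_contra hxa
    exact hfg (hlin.edge_eq (hGE hf) (hGE hg) hxa hxf (hG f hf).2.1 hxg (hG g hg).2.1)
  have he' : {b, a, c} ∈ E := by rwa [Finset.insert_comm]
  obtain ⟨U, hUdef⟩ : ∃ U, U = H.biUnion (fun h => h.erase c) := ⟨_, rfl⟩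
  have haU : a ∉ U := by simp [hUdef]; grind
  have hbU : b ∉ U := by simp [hUdef]; grind
  have hcU : c ∉ U := by simp [hUdef]
  have hU : U.card ≤ 6 := by
    rw [hUdef]
    refine (Finset.card_biUnion_le_card_mul _ _ 2 fun h hh => ?_).trans (by omega)
    rw [Finset.card_erase_of_mem (hH h hh).2.1, hlin.1 h (hHE hh)]
  have three : ∀ f ∈ F, ∀ g ∈ G, Disjoint f g → 3 ≤ (f ∩ U).card + (g ∩ U).card := by
    intro f hf g hg hfg
    rw [hUdef]
    exact three_le_card_inter_add_card_inter hlin hfree he hHcard hHE (fun h hh => (hH h hh).2.1)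
      (hFE hf) (hGE hg) (hF f hf).2.1 (hG g hg).2.1 (hcF f hf) (hcG g hg) hfg
  have hF1 : ∀ f ∈ F, 1 ≤ (f ∩ U).card := by
    intro f hf
    rw [hUdef]
    exact one_le_card_inter hlin hfree he hab hGcard hGE (fun g hg => (hG g hg).2.1) hcG hHcard
      hHE (fun h hh => (hH h hh).2.1) hbH (hFE hf) (hF f hf).2.1 (hbF f hf) (hcF f hf)
  have hG1 : ∀ f ∈ G, 1 ≤ (f ∩ U).card := by
    intro f hf
    rw [hUdef]
    exact one_le_card_inter hlin hfree he' hab.symm hFcard hFE (fun g hg => (hF g hg).2.1) hcF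
      hHcard hHE (fun h hh => (hH h hh).2.1) haH (hGE hf)
      (hG f hf).2.1 (haG f hf) (hcG f hf)
  obtain ⟨f₁, hf₁, f₂, hf₂, hf₁₂⟩ := Finset.one_lt_card.1
    (one_lt_card_filter_inter_card_eq_one haU hU hFcard.ge hFdisj hF1)
  obtain ⟨g₁, hg₁, g₂, hg₂, hg₁₂⟩ := Finset.one_lt_card.1
    (one_lt_card_filter_inter_card_eq_one hbU hU hGcard.ge hGdisj hG1)
  rw [Finset.mem_filter] at hf₁ hf₂ hg₁ hg₂
  obtain ⟨hf₁, hf₁U⟩ := hf₁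
  obtain ⟨hf₂, hf₂U⟩ := hf₂
  obtain ⟨hg₁, hg₁U⟩ := hg₁
  obtain ⟨hg₂, hg₂U⟩ := hg₂
  have meet : ∀ f ∈ F, ∀ g ∈ G, (f ∩ U).card = 1 → (g ∩ U).card = 1 → ∃ x ∈ f, x ∈ g := by
    intro f hf g hg h1 h2
    by_contra! hcon
    have := three f hf g hg (Finset.disjoint_left.2 hcon)
    omega
  obtain ⟨p₁₁, hp₁₁f, hp₁₁g⟩ := meet f₁ hf₁ g₁ hg₁ hf₁U hg₁U
  obtain ⟨p₁₂, hp₁₂f, hp₁₂g⟩ := meet f₁ hf₁ g₂ hg₂ hf₁U hg₂U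
  obtain ⟨p₂₁, hp₂₁f, hp₂₁g⟩ := meet f₂ hf₂ g₁ hg₁ hf₂U hg₁U
  obtain ⟨p₂₂, hp₂₂f, hp₂₂g⟩ := meet f₂ hf₂ g₂ hg₂ hf₂U hg₂U
  have neF : ∀ f ∈ F, ∀ g ∈ G, ∀ g' ∈ G, g ≠ g' → ∀ x y, x ∈ f → x ∈ g → y ∈ g' → x ≠ y := by
    rintro f hf g hg g' hg' hgg' x _ hxf hxg hyg' rfl
    exact hbF f hf (hGdisj g hg g' hg' hgg' x hxg hyg' ▸ hxf)
  have neG : ∀ g ∈ G, ∀ f ∈ F, ∀ f' ∈ F, f ≠ f' → ∀ x y, x ∈ g → x ∈ f → y ∈ f' → x ≠ y := by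
    rintro f hf g hg g' hg' hgg' x _ hxf hxg hyg' rfl
    exact haG f hf (hFdisj g hg g' hg' hgg' x hxg hyg' ▸ hxf)
  have hne₁ := neF f₁ hf₁ g₁ hg₁ g₂ hg₂ hg₁₂ p₁₁ p₁₂ hp₁₁f hp₁₁g hp₁₂g
  have hne₂ := neF f₂ hf₂ g₁ hg₁ g₂ hg₂ hg₁₂ p₂₁ p₂₂ hp₂₁f hp₂₁g hp₂₂g
  have hne₃ := neG g₁ hg₁ f₁ hf₁ f₂ hf₂ hf₁₂ p₁₁ p₂₁ hp₁₁g hp₁₁f hp₂₁f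
  have hne₄ := neG g₂ hg₂ f₁ hf₁ f₂ hf₂ hf₁₂ p₁₂ p₂₂ hp₁₂g hp₁₂f hp₂₂f
  have hne₅ := neF f₁ hf₁ g₁ hg₁ g₂ hg₂ hg₁₂ p₁₁ p₂₂ hp₁₁f hp₁₁g hp₂₂g
  have hne₆ := neF f₂ hf₂ g₁ hg₁ g₂ hg₂ hg₁₂ p₂₁ p₁₂ hp₂₁f hp₂₁g hp₁₂g
  have ne_a : ∀ g ∈ G, ∀ x ∈ g, a ≠ x := fun g hg x hx h => haG g hg (h ▸ hx)
  have ne_b : ∀ f ∈ F, ∀ x ∈ f, b ≠ x := fun g hg x hx h => hbF g hg (h ▸ hx)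
  have ne_c : ∀ f ∈ F, ∀ x ∈ f, c ≠ x := fun g hg x hx h => hcF g hg (h ▸ hx)
  have f₁_eq : f₁ = {a, p₁₁, p₁₂} := Finset.eq_triple_of_mem (hlin.1 _ (hFE hf₁)) (hF _ hf₁).2.1
    hp₁₁f hp₁₂f (ne_a _ hg₁ _ hp₁₁g) (ne_a _ hg₂ _ hp₁₂g) hne₁
  have f₂_eq : f₂ = {a, p₂₁, p₂₂} := Finset.eq_triple_of_mem (hlin.1 _ (hFE hf₂)) (hF _ hf₂).2.1
    hp₂₁f hp₂₂f (ne_a _ hg₁ _ hp₂₁g) (ne_a _ hg₂ _ hp₂₂g) hne₂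
  have g₁_eq : g₁ = {b, p₁₁, p₂₁} := Finset.eq_triple_of_mem (hlin.1 _ (hGE hg₁)) (hG _ hg₁).2.1
    hp₁₁g hp₂₁g (ne_b _ hf₁ _ hp₁₁f) (ne_b _ hf₂ _ hp₂₁f) hne₃
  have g₂_eq : g₂ = {b, p₁₂, p₂₂} := Finset.eq_triple_of_mem (hlin.1 _ (hGE hg₂)) (hG _ hg₂).2.1
    hp₁₂g hp₂₂g (ne_b _ hf₁ _ hp₁₂f) (ne_b _ hf₂ _ hp₂₂f) hne₄
  have hFsub : ∀ f ∈ F, f ≠ f₁ → f ≠ f₂ → f.erase a ⊆ U := by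
    intro f hf h1 h2
    have hd : Disjoint f g₁ := by
      rw [g₁_eq, Finset.disjoint_right]
      simp only [Finset.mem_insert, Finset.mem_singleton]
      rintro x (rfl | rfl | rfl) hx
      · exact hbF f hf hx
      · exact ne_a _ hg₁ _ hp₁₁g (hFdisj f hf f₁ hf₁ h1 _ hx hp₁₁f).symm
      · exact ne_a _ hg₁ _ hp₂₁g (hFdisj f hf f₂ hf₂ h2 _ hx hp₂₁f).symm
    have h3 := three f hf g₁ hg₁ hd
    have h4 : f ∩ U = f.erase a := by
      refine Finset.eq_of_subset_of_card_le (Finset.inter_subset_erase haU) ?_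
      rw [Finset.card_erase_of_mem (hF f hf).2.1, hlin.1 f (hFE hf)]
      omega
    rw [← h4]
    exact Finset.inter_subset_right
  have hGsub : ∀ g ∈ G, g ≠ g₁ → g ≠ g₂ → g.erase b ⊆ U := by
    intro f hf h1 h2
    have hd : Disjoint f₁ f := by
      rw [f₁_eq, Finset.disjoint_left]
      simp only [Finset.mem_insert, Finset.mem_singleton]
      rintro x (rfl | rfl | rfl) hx
      · exact haG f hf hx
      · exact ne_b _ hf₁ _ hp₁₁f (hGdisj f hf g₁ hg₁ h1 _ hx hp₁₁g).symm
      · exact ne_b _ hf₁ _ hp₁₂f (hGdisj f hf g₂ hg₂ h2 _ hx hp₁₂g).symm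
    have h3 := three f₁ hf₁ f hf hd
    have h4 : f ∩ U = f.erase b := by
      refine Finset.eq_of_subset_of_card_le (Finset.inter_subset_erase hbU) ?_
      rw [Finset.card_erase_of_mem (hG f hf).2.1, hlin.1 f (hGE hf)]
      omega
    rw [← h4]
    exact Finset.inter_subset_right
  obtain ⟨f₃, hf₃, f₄, hf₄, hf₃₄, hf₃₁, hf₃₂, hf₄₁, hf₄₂⟩ :=
    exists_two_others hFcard (x := f₁) (y := f₂)
  obtain ⟨g₃, hg₃, g₄, hg₄, hg₃₄, hg₃₁, hg₃₂, hg₄₁, hg₄₂⟩ :=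
    exists_two_others hGcard (x := g₁) (y := g₂)
  have hFeq : {f₁, f₂, f₃, f₄} = F := by
    refine Finset.eq_of_subset_of_card_le ?_ (hFcard.trans_le (le_of_eq ?_))
    · simp [Finset.insert_subset_iff, hf₁, hf₂, hf₃, hf₄]
    · have : [f₁, f₂, f₃, f₄].Nodup := by simp; grind
      simpa using (List.toFinset_card_of_nodup this).symm
  obtain ⟨w₀, w₁, f₃_eq, haw₀, haw₁, hw₀₁⟩ :=
    Finset.exists_eq_insert_pair (hlin.1 _ (hFE hf₃)) (hF _ hf₃).2.1
  obtain ⟨w₂, w₃, f₄_eq, haw₂, haw₃, hw₂₃⟩ :=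
    Finset.exists_eq_insert_pair (hlin.1 _ (hFE hf₄)) (hF _ hf₄).2.1
  obtain ⟨x₀, x₁, g₃_eq, hbx₀, hbx₁, hx₀₁⟩ :=
    Finset.exists_eq_insert_pair (hlin.1 _ (hGE hg₃)) (hG _ hg₃).2.1
  obtain ⟨x₂, x₃, g₄_eq, hbx₂, hbx₃, hx₂₃⟩ :=
    Finset.exists_eq_insert_pair (hlin.1 _ (hGE hg₄)) (hG _ hg₄).2.1
  have hHpair : ∀ h ∈ H, ∃ x y, h = {c, x, y} ∧ x ≠ y ∧ x ∈ U ∧ y ∈ U := by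
    intro h hh
    obtain ⟨x, y, hxy, hcx, hcy, hne⟩ :=
      Finset.exists_eq_insert_pair (hlin.1 _ (hHE hh)) (hH _ hh).2.1
    refine ⟨x, y, hxy, hne, ?_, ?_⟩ <;> rw [hUdef, Finset.mem_biUnion] <;>
      exact ⟨h, hh, by simp [hxy, hcx.symm, hcy.symm]⟩
  have hHmem : ∀ h ∈ H, ∀ p ∈ h, p ≠ c → p ∈ U := by
    intro h hh p hp hpc
    rw [hUdef, Finset.mem_biUnion]
    exact ⟨h, hh, Finset.mem_erase.2 ⟨hpc, hp⟩⟩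
  have sepF : ∀ f ∈ F, ∀ f' ∈ F, f ≠ f' → ∀ x y, x ∈ f → y ∈ f' → a ≠ x → x ≠ y := by
    rintro f hf f' hf' hff' x _ hxf hyf' hax rfl
    exact hax (hFdisj f hf f' hf' hff' x hxf hyf').symm
  have sepG : ∀ f ∈ G, ∀ f' ∈ G, f ≠ f' → ∀ x y, x ∈ f → y ∈ f' → b ≠ x → x ≠ y := by
    rintro f hf f' hf' hff' x _ hxf hyf' hax rfl
    exact hax (hGdisj f hf f' hf' hff' x hxf hyf').symm
  have hw₀f : w₀ ∈ f₃ := by simp [f₃_eq]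
  have hw₁f : w₁ ∈ f₃ := by simp [f₃_eq]
  have hw₂f : w₂ ∈ f₄ := by simp [f₄_eq]
  have hw₃f : w₃ ∈ f₄ := by simp [f₄_eq]
  have hx₀g : x₀ ∈ g₃ := by simp [g₃_eq]
  have hx₁g : x₁ ∈ g₃ := by simp [g₃_eq]
  have hx₂g : x₂ ∈ g₄ := by simp [g₄_eq]
  have hx₃g : x₃ ∈ g₄ := by simp [g₄_eq]
  have key : ∀ v₀ v₁ v₂ v₃ : V, f₁ = {a, v₀, v₁} → f₂ = {a, v₂, v₃} →
      (∃ g ∈ G, g ≠ g₃ ∧ g ≠ g₄ ∧ g = {b, v₀, v₃}) →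
      (∃ g ∈ G, g ≠ g₃ ∧ g ≠ g₄ ∧ g = {b, v₁, v₂}) →
      v₀ ≠ v₁ → v₂ ≠ v₃ → v₁ ∈ U → v₃ ∈ U →
      ∃ v₀ v₁ v₂ v₃ w₀ w₁ w₂ w₃, GluedFano E a b c v₀ v₁ v₂ v₃ w₀ w₁ w₂ w₃ ∧
        (∀ f ∈ F, ∀ p ∈ f, p ≠ a → p ∈ ({v₀, v₁, v₂, v₃, w₀, w₁, w₂, w₃} : Finset V)) ∧
        (∀ h ∈ H, ∀ p ∈ h, p ≠ c → p ∈ ({v₀, v₁, v₂, v₃, w₀, w₁, w₂, w₃} : Finset V)) := by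
    rintro v₀ v₁ v₂ v₃ hf₁v hf₂v ⟨g, hg, hg3, hg4, hgv⟩ ⟨g', hg', hg'3, hg'4, hg'v⟩ hv₀₁ hv₂₃
      hv₁U hv₃U
    have hv₀f : v₀ ∈ f₁ := by simp [hf₁v]
    have hv₁f : v₁ ∈ f₁ := by simp [hf₁v]
    have hv₂f : v₂ ∈ f₂ := by simp [hf₂v]
    have hv₃f : v₃ ∈ f₂ := by simp [hf₂v]
    have hv₀g : v₀ ∈ g := by simp [hgv]
    have hv₃g : v₃ ∈ g := by simp [hgv]
    have hv₁g : v₁ ∈ g' := by simp [hg'v]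
    have hv₂g : v₂ ∈ g' := by simp [hg'v]
    have hav₀ := ne_a _ hg _ hv₀g
    have hav₃ := ne_a _ hg _ hv₃g
    have hav₁ := ne_a _ hg' _ hv₁g
    have hav₂ := ne_a _ hg' _ hv₂g
    have hvv : ∀ v ∈ f₁, ∀ v' ∈ f₂, a ≠ v → v ≠ v' := fun v hv v' hv' =>
      sepF _ hf₁ _ hf₂ hf₁₂ _ _ hv hv'
    have hww : ∀ v ∈ f₃, ∀ v' ∈ f₄, a ≠ v → v ≠ v' := fun v hv v' hv' =>
      sepF _ hf₃ _ hf₄ hf₃₄ _ _ hv hv'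
    have h13 : ∀ v ∈ f₁, ∀ v' ∈ f₃, a ≠ v → v ≠ v' := fun v hv v' hv' =>
      sepF _ hf₁ _ hf₃ hf₃₁.symm _ _ hv hv'
    have h14 : ∀ v ∈ f₁, ∀ v' ∈ f₄, a ≠ v → v ≠ v' := fun v hv v' hv' =>
      sepF _ hf₁ _ hf₄ hf₄₁.symm _ _ hv hv'
    have h23 : ∀ v ∈ f₂, ∀ v' ∈ f₃, a ≠ v → v ≠ v' := fun v hv v' hv' =>
      sepF _ hf₂ _ hf₃ hf₃₂.symm _ _ hv hv'
    have h24 : ∀ v ∈ f₂, ∀ v' ∈ f₄, a ≠ v → v ≠ v' := fun v hv v' hv' =>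
      sepF _ hf₂ _ hf₄ hf₄₂.symm _ _ hv hv'
    have hnodup : [a, b, c, v₀, v₁, v₂, v₃, w₀, w₁, w₂, w₃].Nodup := by
      simp only [List.nodup_cons, List.mem_cons, List.not_mem_nil, not_or, or_false,
        not_false_eq_true, List.nodup_nil, and_true]
      refine ⟨⟨hab, hac, hav₀, hav₁, hav₂, hav₃, haw₀, haw₁, haw₂, haw₃⟩,
        ⟨hbc, ne_b _ hf₁ _ hv₀f, ne_b _ hf₁ _ hv₁f, ne_b _ hf₂ _ hv₂f, ne_b _ hf₂ _ hv₃f,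
          ne_b _ hf₃ _ hw₀f, ne_b _ hf₃ _ hw₁f, ne_b _ hf₄ _ hw₂f, ne_b _ hf₄ _ hw₃f⟩,
        ⟨ne_c _ hf₁ _ hv₀f, ne_c _ hf₁ _ hv₁f, ne_c _ hf₂ _ hv₂f, ne_c _ hf₂ _ hv₃f,
          ne_c _ hf₃ _ hw₀f, ne_c _ hf₃ _ hw₁f, ne_c _ hf₄ _ hw₂f, ne_c _ hf₄ _ hw₃f⟩,
        ⟨hv₀₁, hvv _ hv₀f _ hv₂f hav₀, hvv _ hv₀f _ hv₃f hav₀, h13 _ hv₀f _ hw₀f hav₀,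
          h13 _ hv₀f _ hw₁f hav₀, h14 _ hv₀f _ hw₂f hav₀, h14 _ hv₀f _ hw₃f hav₀⟩,
        ⟨hvv _ hv₁f _ hv₂f hav₁, hvv _ hv₁f _ hv₃f hav₁, h13 _ hv₁f _ hw₀f hav₁,
          h13 _ hv₁f _ hw₁f hav₁, h14 _ hv₁f _ hw₂f hav₁, h14 _ hv₁f _ hw₃f hav₁⟩,
        ⟨hv₂₃, h23 _ hv₂f _ hw₀f hav₂, h23 _ hv₂f _ hw₁f hav₂, h24 _ hv₂f _ hw₂f hav₂,
          h24 _ hv₂f _ hw₃f hav₂⟩,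
        ⟨h23 _ hv₃f _ hw₀f hav₃, h23 _ hv₃f _ hw₁f hav₃, h24 _ hv₃f _ hw₂f hav₃,
          h24 _ hv₃f _ hw₃f hav₃⟩,
        ⟨hw₀₁, hww _ hw₀f _ hw₂f haw₀, hww _ hw₀f _ hw₃f haw₀⟩,
        ⟨hww _ hw₁f _ hw₂f haw₁, hww _ hw₁f _ hw₃f haw₁⟩, hw₂₃⟩
    have hbv₁ := ne_b _ hf₁ _ hv₁f
    have hbv₃ := ne_b _ hf₂ _ hv₃f
    have hx : [v₁, v₃, x₀, x₁, x₂, x₃].Nodup := by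
      simp only [List.nodup_cons, List.mem_cons, List.not_mem_nil, not_or, or_false,
        not_false_eq_true, List.nodup_nil, and_true]
      exact ⟨⟨hvv _ hv₁f _ hv₃f hav₁, sepG _ hg' _ hg₃ hg'3 _ _ hv₁g hx₀g hbv₁,
          sepG _ hg' _ hg₃ hg'3 _ _ hv₁g hx₁g hbv₁, sepG _ hg' _ hg₄ hg'4 _ _ hv₁g hx₂g hbv₁,
          sepG _ hg' _ hg₄ hg'4 _ _ hv₁g hx₃g hbv₁⟩,
        ⟨sepG _ hg _ hg₃ hg3 _ _ hv₃g hx₀g hbv₃, sepG _ hg _ hg₃ hg3 _ _ hv₃g hx₁g hbv₃,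
          sepG _ hg _ hg₄ hg4 _ _ hv₃g hx₂g hbv₃, sepG _ hg _ hg₄ hg4 _ _ hv₃g hx₃g hbv₃⟩,
        ⟨hx₀₁, sepG _ hg₃ _ hg₄ hg₃₄ _ _ hx₀g hx₂g hbx₀, sepG _ hg₃ _ hg₄ hg₃₄ _ _ hx₀g hx₃g hbx₀⟩,
        ⟨sepG _ hg₃ _ hg₄ hg₃₄ _ _ hx₁g hx₂g hbx₁, sepG _ hg₃ _ hg₄ hg₃₄ _ _ hx₁g hx₃g hbx₁⟩,
        hx₂₃⟩
    have hf₃U := hFsub f₃ hf₃ hf₃₁ hf₃₂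
    have hf₄U := hFsub f₄ hf₄ hf₄₁ hf₄₂
    have hg₃U := hGsub g₃ hg₃ hg₃₁ hg₃₂
    have hg₄U := hGsub g₄ hg₄ hg₄₁ hg₄₂
    have hwU : {v₁, v₃, w₀, w₁, w₂, w₃} ⊆ U := by
      simp only [Finset.insert_subset_iff, Finset.singleton_subset_iff]
      exact ⟨hv₁U, hv₃U, hf₃U (Finset.mem_erase.2 ⟨haw₀.symm, hw₀f⟩),
        hf₃U (Finset.mem_erase.2 ⟨haw₁.symm, hw₁f⟩), hf₄U (Finset.mem_erase.2 ⟨haw₂.symm, hw₂f⟩),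
        hf₄U (Finset.mem_erase.2 ⟨haw₃.symm, hw₃f⟩)⟩
    have hxU : {x₀, x₁, x₂, x₃} ⊆ U := by
      simp only [Finset.insert_subset_iff, Finset.singleton_subset_iff]
      exact ⟨hg₃U (Finset.mem_erase.2 ⟨hbx₀.symm, hx₀g⟩),
        hg₃U (Finset.mem_erase.2 ⟨hbx₁.symm, hx₁g⟩), hg₄U (Finset.mem_erase.2 ⟨hbx₂.symm, hx₂g⟩),
        hg₄U (Finset.mem_erase.2 ⟨hbx₃.symm, hx₃g⟩)⟩
    obtain ⟨hUeq, hconf⟩ := gluedFano_or_gluedFano hlin hfree he hnodup hx hU hwU hxU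
      (hf₁v ▸ hFE hf₁) (hf₂v ▸ hFE hf₂) (hgv ▸ hGE hg) (hg'v ▸ hGE hg') (f₃_eq ▸ hFE hf₃)
      (f₄_eq ▸ hFE hf₄) (g₃_eq ▸ hGE hg₃) (g₄_eq ▸ hGE hg₄) hHcard hHE hHpair
    have hFcover : ∀ f ∈ F, ∀ p ∈ f, p ≠ a →
        p ∈ ({v₀, v₁, v₂, v₃, w₀, w₁, w₂, w₃} : Finset V) := by
      intro f hf p hp hpa
      rw [← hFeq] at hf
      simp only [Finset.mem_insert, Finset.mem_singleton] at hf
      rcases hf with rfl | rfl | rfl | rfl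
      · rw [hf₁v, Finset.mem_insert] at hp
        exact Finset.mem_of_subset (by simp [Finset.insert_subset_iff]) (hp.resolve_left hpa)
      · rw [hf₂v, Finset.mem_insert] at hp
        exact Finset.mem_of_subset (by simp [Finset.insert_subset_iff]) (hp.resolve_left hpa)
      · rw [f₃_eq, Finset.mem_insert] at hp
        exact Finset.mem_of_subset (by simp [Finset.insert_subset_iff]) (hp.resolve_left hpa)
      · rw [f₄_eq, Finset.mem_insert] at hp
        exact Finset.mem_of_subset (by simp [Finset.insert_subset_iff]) (hp.resolve_left hpa)
    have hHcover : ∀ h ∈ H, ∀ p ∈ h, p ≠ c →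
        p ∈ ({v₀, v₁, v₂, v₃, w₀, w₁, w₂, w₃} : Finset V) := by
      intro h hh p hp hpc
      have hpU := hHmem h hh p hp hpc
      rw [hUeq] at hpU
      exact Finset.mem_of_subset (by simp [Finset.insert_subset_iff]) hpU
    rcases hconf with hconf | hconf
    · exact ⟨_, _, _, _, _, _, _, _, hconf, hFcover, hHcover⟩
    · refine ⟨_, _, _, _, _, _, _, _, hconf, ?_, ?_⟩ <;> rwa [Finset.pair_comm w₃ w₂]
  have u₁ := Finset.mem_iff_notMem_of_inter_card_eq_one haU hne₁ (f₁_eq ▸ hf₁U)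
  have u₂ := Finset.mem_iff_notMem_of_inter_card_eq_one haU hne₂ (f₂_eq ▸ hf₂U)
  have u₃ := Finset.mem_iff_notMem_of_inter_card_eq_one hbU hne₃ (g₁_eq ▸ hg₁U)
  by_cases hp : p₁₂ ∈ U
  · exact key p₁₁ p₁₂ p₂₂ p₂₁ f₁_eq (by rw [f₂_eq, Finset.pair_comm])
      ⟨g₁, hg₁, hg₃₁.symm, hg₄₁.symm, g₁_eq⟩ ⟨g₂, hg₂, hg₃₂.symm, hg₄₂.symm, g₂_eq⟩ hne₁
      hne₂.symm hp (by by_contra h; exact u₁.1 (u₃.2 h) hp)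
  · exact key p₁₂ p₁₁ p₂₁ p₂₂ (by rw [f₁_eq, Finset.pair_comm]) f₂_eq
      ⟨g₂, hg₂, hg₃₂.symm, hg₄₂.symm, g₂_eq⟩ ⟨g₁, hg₁, hg₃₁.symm, hg₄₁.symm, g₁_eq⟩ hne₁.symm
      hne₂ (u₁.2 hp) (by by_contra h; exact u₃.1 (u₁.2 hp) (u₂.2 h))

theorem IsLinear.degree_le_three {V : Type*} [DecidableEq V] {r : ℕ} {E : Finset (Finset V)}
    (hlin : IsLinear r E) {a b c p : V} (hp : p ∉ ({a, b, c} : Finset V))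
    (h : ∀ k ∈ E, p ∈ k → a ∈ k ∨ b ∈ k ∨ c ∈ k) : degree E p ≤ 3 := by
  have hfilter : E.filter (fun k => p ∈ k) =
      E.filter (fun k => p ∈ k ∧ ¬ Disjoint k {a, b, c}) := by
    refine Finset.filter_congr fun k hk => ⟨fun hpk => ⟨hpk, ?_⟩, And.left⟩
    have := h k hk hpk
    simp [Finset.disjoint_insert_right]
    tauto
  rw [degree, hfilter]
  exact (hlin.card_filter_not_disjoint_le hp).trans Finset.card_le_three

theorem GluedFano.degree_le_three {V : Type*} [DecidableEq V] {E : Finset (Finset V)}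
    (hlin : IsLinear 3 E) (hfree : ¬ HasCrown 3 E) {a b c v₀ v₁ v₂ v₃ w₀ w₁ w₂ w₃ : V}
    (F : GluedFano E a b c v₀ v₁ v₂ v₃ w₀ w₁ w₂ w₃) {p : V}
    (hp : p ∈ ({v₀, v₁, v₂, v₃, w₀, w₁, w₂, w₃} : Finset V)) : degree E p ≤ 3 := by
  refine hlin.degree_le_three (a := a) (b := b) (c := c) ?_ fun k hk hpk => ?_
  · have hn := F.nodup
    simp only [List.nodup_cons, List.mem_cons, List.not_mem_nil, not_or, or_false] at hn
    simp only [Finset.mem_insert, Finset.mem_singleton] at hp ⊢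
    grind
  · by_contra! hcon
    exact F.notMem hlin hfree hk hcon.1 hcon.2.1 hcon.2.2 hp hpk

theorem card_filter_mem_erase {V : Type*} [DecidableEq V] {E : Finset (Finset V)} {e : Finset V}
    (he : e ∈ E) {x : V} (hx : x ∈ e) :
    ((E.filter (fun f => x ∈ f)).erase e).card + 1 = degree E x :=
  Finset.card_erase_add_one (Finset.mem_filter.2 ⟨he, hx⟩)

/-- An edge with two vertices of degree 5 and a third one of degree 4 or 5. -/
def IsHeavy {V : Type*} [DecidableEq V] (E : Finset (Finset V)) (e : Finset V) : Prop :=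
  ∃ a b c, e = {a, b, c} ∧ a ≠ b ∧ a ≠ c ∧ b ≠ c ∧
    degree E a = 5 ∧ degree E b = 5 ∧ 4 ≤ degree E c ∧ degree E c ≤ 5

theorem IsHeavy.four_le_degree {V : Type*} [DecidableEq V] {E : Finset (Finset V)}
    {e : Finset V} (he : IsHeavy E e) {x : V} (hx : x ∈ e) : 4 ≤ degree E x := by
  obtain ⟨a, b, c, rfl, -, -, -, ha, hb, hc, -⟩ := he
  simp only [Finset.mem_insert, Finset.mem_singleton] at hx
  rcases hx with rfl | rfl | rfl <;> omega

theorem IsHeavy.degree_le_five {V : Type*} [DecidableEq V] {E : Finset (Finset V)}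
    {e : Finset V} (he : IsHeavy E e) {x : V} (hx : x ∈ e) : degree E x ≤ 5 := by
  obtain ⟨a, b, c, rfl, -, -, -, ha, hb, hc, hc'⟩ := he
  simp only [Finset.mem_insert, Finset.mem_singleton] at hx
  rcases hx with rfl | rfl | rfl <;> omega

/-- An edge meeting a heavy edge in a vertex `x` has degree at most 3 at its other vertices. -/
theorem IsHeavy.degree_le_three {V : Type*} [DecidableEq V] {E : Finset (Finset V)}
    (hlin : IsLinear 3 E) (hfree : ¬ HasCrown 3 E) {e f : Finset V} (he : e ∈ E)
    (hheavy : IsHeavy E e) (hf : f ∈ E) (hfe : f ≠ e) {x p : V} (hxe : x ∈ e) (hxf : x ∈ f)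
    (hpf : p ∈ f) (hpx : p ≠ x) : degree E p ≤ 3 := by
  obtain ⟨a, b, c, rfl, hab, hac, hbc, ha, hb, hc, -⟩ := hheavy
  have cardA := card_filter_mem_erase he (x := a) (by simp)
  have cardB := card_filter_mem_erase he (x := b) (by simp)
  have cardC := card_filter_mem_erase he (x := c) (by simp)
  have star : ∀ y : V, ∀ g ∈ (E.filter (fun f => y ∈ f)).erase {a, b, c},
      g ∈ E ∧ y ∈ g ∧ g ≠ {a, b, c} := by
    intro y g hg
    rw [Finset.mem_erase, Finset.mem_filter] at hg
    exact ⟨hg.2.1, hg.2.2, hg.1⟩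
  have hfstar : f ∈ (E.filter (fun f => x ∈ f)).erase {a, b, c} :=
    Finset.mem_erase.2 ⟨hfe, Finset.mem_filter.2 ⟨hf, hxf⟩⟩
  simp only [Finset.mem_insert, Finset.mem_singleton] at hxe
  rcases hxe with rfl | rfl | rfl
  · obtain ⟨H, hH, hHcard⟩ := Finset.exists_subset_card_eq (by omega :
      3 ≤ ((E.filter (fun f => c ∈ f)).erase {x, b, c}).card)
    obtain ⟨_, _, _, _, _, _, _, _, F, h1, -⟩ := exists_gluedFano hlin hfree he hab hac hbc
      (by omega) (star x) (by omega) (star b) hHcard (fun h hh => star c h (hH hh))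
    exact F.degree_le_three hlin hfree (h1 f hfstar p hpf hpx)
  · obtain ⟨H, hH, hHcard⟩ := Finset.exists_subset_card_eq (by omega :
      3 ≤ ((E.filter (fun f => c ∈ f)).erase {a, x, c}).card)
    rw [Finset.insert_comm] at he
    simp only [Finset.insert_comm a x] at *
    obtain ⟨_, _, _, _, _, _, _, _, F, h1, -⟩ := exists_gluedFano hlin hfree he hab.symm hbc hac
      (by omega) (star x) (by omega) (star a) hHcard (fun h hh => star c h (hH hh))
    exact F.degree_le_three hlin hfree (h1 f hfstar p hpf hpx)
  · obtain ⟨H, hfH, hH, hHcard⟩ := Finset.exists_subsuperset_card_eq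
      (Finset.singleton_subset_iff.2 hfstar) (by simp : _ ≤ 3) (by omega)
    obtain ⟨_, _, _, _, _, _, _, _, F, -, h2⟩ := exists_gluedFano hlin hfree he hab hac hbc
      (by omega) (star a) (by omega) (star b) hHcard (fun h hh => star x h (hH hh))
    exact F.degree_le_three hlin hfree (h2 f (hfH (by simp)) p hpf hpx)

theorem exists_eq_triple_of_degree_antitone {V : Type*} [DecidableEq V] (d : V → ℕ)
    {e : Finset V} (he : e.card = 3) :
    ∃ a b c, e = {a, b, c} ∧ a ≠ b ∧ a ≠ c ∧ b ≠ c ∧ d b ≤ d a ∧ d c ≤ d b := by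
  obtain ⟨a, b, c, hab, hac, hbc, rfl⟩ := Finset.card_eq_three.1 he
  have perm : ∀ x y z : V, ({x, y, z} : Finset V) = {a, b, c} → x ≠ y → x ≠ z → y ≠ z →
      d y ≤ d x → d z ≤ d y → ∃ x y z, ({a, b, c} : Finset V) = {x, y, z} ∧ x ≠ y ∧ x ≠ z ∧
        y ≠ z ∧ d y ≤ d x ∧ d z ≤ d y :=
    fun x y z h h1 h2 h3 h4 h5 => ⟨x, y, z, h.symm, h1, h2, h3, h4, h5⟩
  rcases le_total (d a) (d b) with h1 | h1 <;> rcases le_total (d a) (d c) with h2 | h2 <;>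
    rcases le_total (d b) (d c) with h3 | h3
  · exact perm c b a (by ext; simp; tauto) hbc.symm hac.symm hab.symm h3 h1
  · exact perm b c a (by ext; simp; tauto) hbc hab.symm hac.symm h3 h2
  · exact perm b a c (by ext; simp; tauto) hab.symm hbc hac h1 h2
  · exact perm b a c (by ext; simp; tauto) hab.symm hbc hac h1 h2
  · exact perm c a b (by ext; simp; tauto) hac.symm hbc.symm hab h2 h1
  · exact perm a b c rfl hab hac hbc h1 h3
  · exact perm a c b (by ext; simp; tauto) hac hab hbc.symm h2 h3
  · exact perm a b c rfl hab hac hbc h1 h3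

open Classical in
/-- The share of the vertex `v` that is assigned to the edge `e`: a vertex of degree at most 5
on a heavy edge goes to that edge entirely, and otherwise it is divided equally. -/
noncomputable def share {V : Type*} [DecidableEq V] (E : Finset (Finset V)) (e : Finset V)
    (v : V) : ℝ :=
  if degree E v ≤ 5 then
    if ∃ f ∈ E, IsHeavy E f ∧ v ∈ f then if IsHeavy E e then 1 else 0
    else (degree E v : ℝ)⁻¹
  else 0

theorem share_nonneg {V : Type*} [DecidableEq V] (E : Finset (Finset V)) (e : Finset V)
    (v : V) : 0 ≤ share E e v := by
  unfold share
  split_ifs <;> positivity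

theorem sum_share_le {V : Type*} [DecidableEq V] {E : Finset (Finset V)}
    (hlin : IsLinear 3 E) (hfree : ¬ HasCrown 3 E) (v : V) :
    ∑ e ∈ E.filter (fun e => v ∈ e), share E e v ≤ if 6 ≤ degree E v then 0 else 1 := by
  classical
  by_cases h6 : 6 ≤ degree E v
  · rw [if_pos h6]
    refine Finset.sum_nonpos fun e _ => ?_
    rw [share, if_neg (by omega)]
  rw [if_neg h6]
  by_cases hheavy : ∃ f ∈ E, IsHeavy E f ∧ v ∈ f
  · simp only [share, if_pos (show degree E v ≤ 5 by omega), if_pos hheavy]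
    rw [← Finset.sum_filter, Finset.sum_const, nsmul_eq_mul, mul_one]
    have hcard : ((E.filter (fun e => v ∈ e)).filter (fun e => IsHeavy E e)).card ≤ 1 := by
      refine Finset.card_le_one.2 fun e he f hf => ?_
      simp only [Finset.mem_filter] at he hf
      by_contra hne
      obtain ⟨p, hp, hpv⟩ := Finset.exists_mem_ne (by rw [hlin.1 f hf.1.1]; norm_num : 1 < f.card) v
      have h1 := he.2.degree_le_three hlin hfree he.1.1 hf.1.1 (Ne.symm hne) he.1.2 hf.1.2 hp hpv
      have h2 := hf.2.four_le_degree hp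
      omega
    exact_mod_cast hcard
  · simp only [share, if_pos (show degree E v ≤ 5 by omega), if_neg hheavy]
    rw [Finset.sum_const, nsmul_eq_mul]
    exact mul_inv_le_one

theorem two_thirds_le_sum_share {V : Type*} [DecidableEq V] {E : Finset (Finset V)}
    (hlin : IsLinear 3 E) (hfree : ¬ HasCrown 3 E) {e : Finset V} (he : e ∈ E) :
    2 / 3 ≤ ∑ v ∈ e, share E e v := by
  classical
  have hpos : ∀ v ∈ e, 1 ≤ degree E v := fun v hv =>
    Finset.card_pos.2 ⟨e, Finset.mem_filter.2 ⟨he, hv⟩⟩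
  by_cases hheavy : IsHeavy E e
  · obtain ⟨v, hv⟩ := Finset.card_pos.1 (by rw [hlin.1 e he]; norm_num : 0 < e.card)
    refine le_trans ?_ (Finset.single_le_sum (fun v _ => share_nonneg E e v) hv)
    rw [share, if_pos (hheavy.degree_le_five hv), if_pos ⟨e, he, hheavy, hv⟩, if_pos hheavy]
    norm_num
  have third : ∀ y ∈ e, degree E y ≤ 3 → 1 / 3 ≤ share E e y := by
    intro y hy h3
    have hno : ¬ ∃ f ∈ E, IsHeavy E f ∧ y ∈ f := by
      rintro ⟨f, -, hf, hyf⟩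
      have := hf.four_le_degree hyf
      omega
    rw [share, if_pos (by omega), if_neg hno, one_div]
    have h1 : (1 : ℝ) ≤ degree E y := by exact_mod_cast hpos y hy
    have h2 : (degree E y : ℝ) ≤ 3 := by exact_mod_cast h3
    exact inv_anti₀ (by linarith) h2
  by_cases hmeet : ∃ x ∈ e, ∃ f ∈ E, IsHeavy E f ∧ x ∈ f
  · obtain ⟨x, hxe, f, hf, hfheavy, hxf⟩ := hmeet
    have hfe : e ≠ f := by
      rintro rfl
      exact hheavy hfheavy
    rw [← Finset.add_sum_erase e _ hxe]
    have hcard : (e.erase x).card = 2 := by rw [Finset.card_erase_of_mem hxe, hlin.1 e he]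
    have hsum : (e.erase x).card • (1 / 3 : ℝ) ≤ ∑ y ∈ e.erase x, share E e y := by
      refine Finset.card_nsmul_le_sum _ _ _ fun y hy => ?_
      rw [Finset.mem_erase] at hy
      exact third y hy.2 (hfheavy.degree_le_three hlin hfree hf he hfe hxf hxe hy.2 hy.1)
    have hx := share_nonneg E e x
    rw [hcard, nsmul_eq_mul] at hsum
    norm_num at hsum
    linarith
  push Not at hmeet
  have hshare : ∀ v ∈ e, degree E v ≤ 5 → share E e v = (degree E v : ℝ)⁻¹ := by
    intro v hv h5
    rw [share, if_pos h5, if_neg]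
    rintro ⟨f, hf, hfheavy, hvf⟩
    exact hmeet v hv f hf hfheavy hvf
  obtain ⟨a, b, c, rfl, hab, hac, hbc, hba, hcb⟩ :=
    exists_eq_triple_of_degree_antitone (degree E) (hlin.1 e he)
  rw [Finset.sum_insert (by simp [hab, hac]), Finset.sum_pair hbc]
  have ha := share_nonneg E {a, b, c} a
  have hb := share_nonneg E {a, b, c} b
  have hc := share_nonneg E {a, b, c} c
  have hc1 := hpos c (by simp)
  by_cases ha6 : 6 ≤ degree E a
  · by_cases hb4 : 4 ≤ degree E b
    · have hdc : degree E c = 1 := by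
        by_contra hne
        exact false_of_degrees_of_crown_free hlin hfree he hab hac hbc ha6 hb4 (by omega)
      rw [hshare c (by simp) (by omega), hdc]
      norm_num
      linarith
    · have h1 := third b (by simp) (by omega)
      have h2 := third c (by simp) (by omega)
      linarith
  · rw [hshare a (by simp) (by omega), hshare b (by simp) (by omega),
      hshare c (by simp) (by omega)]
    have hnot : ¬ (degree E a = 5 ∧ degree E b = 5 ∧ 4 ≤ degree E c) := fun h =>
      hheavy ⟨a, b, c, rfl, hab, hac, hbc, h.1, h.2.1, h.2.2, by omega⟩
    generalize degree E a = x at *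
    generalize degree E b = y at *
    generalize degree E c = z at *
    have hx : x ≤ 5 := by omega
    clear third hshare hmeet hheavy hpos ha hb hc
    interval_cases x <;> interval_cases y <;> interval_cases z <;> first | omega | norm_num

/-- If `G` is a crown-free linear 3-graph on `n` vertices and `s` is the number of
vertices of degree at least 6, then `|E(G)| ≤ 3(n-s)/2`. -/
theorem crown_free_refined_upper_bound {V : Type*} [DecidableEq V] [Fintype V]
    (E : Finset (Finset V)) (hlin : IsLinear 3 E) (hfree : ¬ HasCrown 3 E)
    (s : ℕ) (hs : s = (Finset.univ.filter (fun v : V => 6 ≤ degree E v)).card) :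
    (E.card : ℝ) ≤ 3 * ((Fintype.card V : ℝ) - s) / 2 := by
  have hdouble : ∑ e ∈ E, ∑ v ∈ e, share E e v =
      ∑ v : V, ∑ e ∈ E.filter (fun e => v ∈ e), share E e v :=
    Finset.sum_comm' fun e v => by simp
  have hlow : E.card • (2 / 3 : ℝ) ≤ ∑ e ∈ E, ∑ v ∈ e, share E e v :=
    Finset.card_nsmul_le_sum _ _ _ fun e he => two_thirds_le_sum_share hlin hfree he
  have hupp : ∑ v : V, ∑ e ∈ E.filter (fun e => v ∈ e), share E e v ≤
      ∑ v : V, (1 - if 6 ≤ degree E v then 1 else 0 : ℝ) := by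
    refine Finset.sum_le_sum fun v _ => (sum_share_le hlin hfree v).trans ?_
    split_ifs <;> norm_num
  rw [Finset.sum_sub_distrib, Finset.sum_const, Finset.card_univ, nsmul_eq_mul, mul_one,
    Finset.sum_boole, ← hs] at hupp
  rw [nsmul_eq_mul] at hlow
  linarith
end

section
/- Let r ≥ 3 and let G be a linear r-uniform hypergraph on n vertices containing no copy of C_{1r} and no copy of C*. If s denotes the number of vertices of G with degree at least (r-1)^2 + 2, then the number of edges of G is at most r(r-2)(n - s)/(r-1). -/
open Finset

section Linear

variable {V : Type*} [DecidableEq V] {r : ℕ} {E : Finset (Finset V)}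

lemma IsLinear.edge_eq_s4 (hlin : IsLinear r E) {a b : Finset V} (ha : a ∈ E) (hb : b ∈ E)
    {u v : V} (huv : u ≠ v) (hua : u ∈ a) (hva : v ∈ a) (hub : u ∈ b) (hvb : v ∈ b) : a = b := by
  by_contra hne
  have h := Finset.card_le_one.1 (hlin.2 a ha b hb hne) u (by simp [hua, hub]) v
    (by simp [hva, hvb])
  exact huv h

lemma IsLinear.inter_card_eq_one_s4 (hlin : IsLinear r E) {a b : Finset V} (ha : a ∈ E)
    (hb : b ∈ E) (hne : a ≠ b) {u : V} (hua : u ∈ a) (hub : u ∈ b) : (a ∩ b).card = 1 :=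
  le_antisymm (hlin.2 a ha b hb hne) (Finset.card_pos.2 ⟨u, by simp [hua, hub]⟩)

/-- The edges through `v` other than `e`. -/
def otherEdges (E : Finset (Finset V)) (e : Finset V) (v : V) : Finset (Finset V) :=
  E.filter (fun g => v ∈ g ∧ g ≠ e)

lemma mem_otherEdges {e g : Finset V} {v : V} :
    g ∈ otherEdges E e v ↔ g ∈ E ∧ v ∈ g ∧ g ≠ e := by
  simp [otherEdges]

lemma card_otherEdges_add_one {e : Finset V} {v : V} (he : e ∈ E) (hv : v ∈ e) :
    (otherEdges E e v).card + 1 = degree E v := by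
  have h : otherEdges E e v = (E.filter (fun g => v ∈ g)).erase e := by
    ext g; simp only [mem_otherEdges, mem_erase, mem_filter]; tauto
  rw [h, degree]
  exact Finset.card_erase_add_one (by simp [he, hv])

lemma degree_pos {e : Finset V} {v : V} (he : e ∈ E) (hv : v ∈ e) : 0 < degree E v :=
  Finset.card_pos.2 ⟨e, by simp [he, hv]⟩

/-- An edge `f` through `p ∈ e` meets at most `r - 1` of the other edges through `q ∈ e`. -/
lemma IsLinear.card_meeting_le (hlin : IsLinear r E) {e f : Finset V} (he : e ∈ E) (hf : f ∈ E)
    {p q : V} (hpe : p ∈ e) (hqe : q ∈ e) (hpq : p ≠ q) (hpf : p ∈ f) (hfe : f ≠ e) :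
    ((otherEdges E e q).filter (fun g => ¬ Disjoint f g)).card ≤ r - 1 := by
  have hq : q ∉ f := fun hq => hfe (hlin.edge_eq_s4 hf he hpq hpf hq hpe hqe)
  have key : ∀ g ∈ (otherEdges E e q).filter (fun g => ¬ Disjoint f g),
      ∃ u, u ∈ f.erase p ∧ u ∈ g := by
    intro g hg
    simp only [mem_filter, mem_otherEdges] at hg
    obtain ⟨u, huf, hug⟩ := Finset.not_disjoint_iff.1 hg.2
    refine ⟨u, Finset.mem_erase.2 ⟨?_, huf⟩, hug⟩
    rintro rfl
    exact hg.1.2.2 (hlin.edge_eq_s4 hg.1.1 he hpq hug hg.1.2.1 hpe hqe)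
  have : Nonempty V := ⟨p⟩
  choose! φ hφ using key
  have hcard : (f.erase p).card = r - 1 := by rw [Finset.card_erase_of_mem hpf, hlin.1 f hf]
  rw [← hcard]
  refine Finset.card_le_card_of_injOn φ (fun g hg => (hφ g hg).1) ?_
  intro g hg g' hg' heq
  have h1 := hφ g hg
  have h2 := hφ g' hg'
  simp only [coe_filter, Set.mem_ofPred_eq, mem_otherEdges] at hg hg'
  refine hlin.edge_eq_s4 hg.1.1 hg'.1.1 (u := φ g) (v := q) ?_ h1.2 hg.1.2.1 (heq ▸ h2.2) hg'.1.2.1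
  rintro h
  exact hq (h ▸ (Finset.mem_erase.1 h1.1).2)

/-- Greedy construction of a crown around `e`. -/
lemma IsLinear.hasCrown_of_degree (hlin : IsLinear r E) {e : Finset V} (he : e ∈ E)
    (v : Fin r → V) (hv : Function.Injective v) (hve : ∀ i, v i ∈ e)
    (hdeg : ∀ i : Fin r, (i : ℕ) * (r - 1) + 1 < degree E (v i)) : HasCrown r E := by
  have main : ∀ k : ℕ, k ≤ r → ∃ f : Fin r → Finset V, ∀ i : Fin r, (i : ℕ) < k →
      f i ∈ otherEdges E e (v i) ∧ ∀ j : Fin r, (j : ℕ) < i → Disjoint (f j) (f i) := by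
    intro k
    induction k with
    | zero => exact fun _ => ⟨fun _ => ∅, fun i hi => absurd hi (by omega)⟩
    | succ k ih =>
      intro hk
      obtain ⟨f, hf⟩ := ih (by omega)
      let K : Fin r := ⟨k, hk⟩
      let B : Finset (Finset V) := (Finset.univ.filter (fun j : Fin r => (j : ℕ) < k)).biUnion
        (fun j => (otherEdges E e (v K)).filter (fun g => ¬ Disjoint (f j) g))
      have hB : B.card ≤ k * (r - 1) := by
        have hc : (Finset.univ.filter (fun j : Fin r => (j : ℕ) < k)).card ≤ k := by
          rw [← Finset.card_range k]
          exact Finset.card_le_card_of_injOn (fun j => (j : ℕ)) (by intro j; simp)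
            (fun a _ b _ h => Fin.ext h)
        refine (Finset.card_biUnion_le_card_mul _ _ (r - 1) ?_).trans (Nat.mul_le_mul_right _ hc)
        intro j hj
        have hjk : (j : ℕ) < k := by simpa using hj
        obtain ⟨h1, h2, h3⟩ := mem_otherEdges.1 (hf j hjk).1
        refine hlin.card_meeting_le he h1 (hve j) (hve K) (fun h => ?_) h2 h3
        have := congrArg Fin.val (hv h)
        simp only [K] at this
        omega
      have hlt : B.card < (otherEdges E e (v K)).card := by
        have h1 := card_otherEdges_add_one he (hve K)
        have h2 := hdeg K
        simp only [K] at h1 h2 ⊢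
        omega
      obtain ⟨g, hg, hgB⟩ := Finset.exists_mem_notMem_of_card_lt_card hlt
      refine ⟨Function.update f K g, ?_⟩
      intro i hi
      have hne : ∀ j : Fin r, (j : ℕ) < k → j ≠ K := by
        rintro j hj rfl
        exact lt_irrefl _ hj
      rcases Nat.lt_succ_iff_lt_or_eq.1 hi with hik | hik
      · refine ⟨by simpa [hne i hik] using (hf i hik).1, fun j hj => ?_⟩
        simpa [hne i hik, hne j (hj.trans hik)] using (hf i hik).2 j hj
      · obtain rfl : i = K := Fin.ext hik
        refine ⟨by simpa using hg, fun j hj => ?_⟩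
        have hjk : (j : ℕ) < k := hj
        simp only [hne j hjk, Function.update_self, ne_eq, not_false_eq_true,
          Function.update_of_ne]
        by_contra hd
        exact hgB (Finset.mem_biUnion.2 ⟨j, by simpa using hjk, by simp [hg, hd]⟩)
  obtain ⟨f, hf⟩ := main r le_rfl
  have hm := fun i => mem_otherEdges.1 (hf i i.2).1
  refine ⟨e, he, f, fun i => (hm i).1, fun i => (hm i).2.2, fun i j hij => ?_, fun i => ?_⟩
  · rw [← Finset.disjoint_iff_inter_eq_empty]
    rcases lt_or_gt_of_ne hij with h | h
    · exact (hf j j.2).2 i h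
    · exact ((hf i i.2).2 j h).symm
  · exact hlin.inter_card_eq_one_s4 he (hm i).1 (hm i).2.2.symm (hve i) (hm i).2.1

/-- An edge of a crown-free linear hypergraph containing a vertex of large degree has
enough vertices of small degree. -/
lemma IsLinear.weight_of_high (hr : 3 ≤ r) (hlin : IsLinear r E) (hfree : ¬ HasCrown r E)
    {e : Finset V} (he : e ∈ E) {y : V} (hy : y ∈ e) (hyd : (r - 1) ^ 2 + 2 ≤ degree E y) :
    ((r : ℝ) - 1) / (r * (r - 2)) ≤
      ∑ v ∈ e, if (r - 1) ^ 2 + 2 ≤ degree E v then 0 else (1 : ℝ) / degree E v := by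
  obtain ⟨φ⟩ : Nonempty (Fin r ≃ e) := ⟨(Fintype.equivFinOfCardEq (by simp [hlin.1 e he])).symm⟩
  let d : Fin r → ℕ := fun i => degree E (φ i)
  let v : Fin r → V := fun i => φ (Tuple.sort d i)
  have hmono : Monotone (fun i => degree E (v i)) := Tuple.monotone_sort d
  have hvinj : Function.Injective v :=
    Subtype.val_injective.comp (φ.injective.comp (Equiv.injective _))
  have hve : ∀ i, v i ∈ e := fun i => (φ _).2
  obtain ⟨i, hi⟩ : ∃ i : Fin r, degree E (v i) ≤ (i : ℕ) * (r - 1) + 1 := by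
    by_contra! hcon
    exact hfree (hlin.hasCrown_of_degree he v hvinj hve hcon)
  obtain ⟨t, ht⟩ : ∃ t, v t = y := ⟨(Tuple.sort d).symm (φ.symm ⟨y, hy⟩), by simp [v]⟩
  have hir : (i : ℕ) + 2 ≤ r := by
    by_contra hcon
    have hi' : (i : ℕ) = r - 1 := by have := i.2; omega
    have hti : t ≤ i := by rw [Fin.le_def]; have := t.2; omega
    have h1 := hmono hti
    simp only [ht] at h1
    rw [hi', ← sq] at hi
    omega
  obtain ⟨m, rfl⟩ : ∃ m, r = m + 3 := ⟨r - 3, by omega⟩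
  simp only [Nat.add_succ_sub_one] at *
  have hlow : (i : ℕ) * (m + 2) + 1 < (m + 2) ^ 2 + 2 := by nlinarith
  let S : Finset V := (Finset.univ.filter (fun j => j ≤ i)).image v
  have hScard : S.card = i + 1 := by
    rw [Finset.card_image_of_injective _ hvinj]
    have : Finset.univ.filter (fun j => j ≤ i) = Finset.Iic i := by ext; simp
    rw [this, Fin.card_Iic]
  have hSe : S ⊆ e := by
    intro w hw
    obtain ⟨j, -, rfl⟩ := Finset.mem_image.1 hw
    exact hve j
  have hSd : ∀ w ∈ S, degree E w ≤ (i : ℕ) * (m + 2) + 1 := by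
    intro w hw
    obtain ⟨j, hj, rfl⟩ := Finset.mem_image.1 hw
    exact (hmono (by simpa using hj)).trans hi
  calc (((m + 3 : ℕ) : ℝ) - 1) / ((m + 3 : ℕ) * (((m + 3 : ℕ) : ℝ) - 2))
      ≤ S.card • ((1 : ℝ) / ((i : ℕ) * (m + 2) + 1)) := by
        rw [hScard, nsmul_eq_mul, mul_one_div, div_le_div_iff₀]
        · push_cast
          have h1 : ((i : ℕ) : ℝ) ≤ m + 1 := by exact_mod_cast (by omega : (i : ℕ) ≤ m + 1)
          have h2 : (0 : ℝ) ≤ m := by positivity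
          nlinarith
        · push_cast
          have h2 : (0 : ℝ) ≤ m := by positivity
          nlinarith
        · positivity
    _ ≤ ∑ w ∈ S, if (m + 2) ^ 2 + 2 ≤ degree E w then 0 else (1 : ℝ) / degree E w := by
        refine Finset.card_nsmul_le_sum _ _ _ fun w hw => ?_
        have h1 := hSd w hw
        rw [if_neg (by omega)]
        have h2 : 0 < degree E w := degree_pos he (hSe hw)
        refine one_div_le_one_div_of_le (by exact_mod_cast h2) (by exact_mod_cast h1)
    _ ≤ _ := by
        refine Finset.sum_le_sum_of_subset_of_nonneg hSe fun w _ _ => ?_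
        split_ifs <;> positivity

/-- Double counting: if every vertex of small degree distributes total weight at most one
among its edges and every edge receives at least `c`, then `c * |E| ≤ n - s`. -/
lemma card_mul_le_of_weight [Fintype V] (D : ℕ) (c : ℝ) (w : V → Finset V → ℝ)
    (hw : ∀ v, ∑ e ∈ E.filter (fun e => v ∈ e), w v e ≤ if D ≤ degree E v then 0 else 1)
    (hc : ∀ e ∈ E, c ≤ ∑ v ∈ e, w v e) :
    c * E.card ≤ Fintype.card V - (Finset.univ.filter (fun v : V => D ≤ degree E v)).card := by
  have h1 : c * E.card ≤ ∑ e ∈ E, ∑ v ∈ e, w v e := by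
    have := Finset.card_nsmul_le_sum E _ c hc
    rwa [nsmul_eq_mul, mul_comm] at this
  have h2 : ∑ e ∈ E, ∑ v ∈ e, w v e = ∑ v : V, ∑ e ∈ E.filter (fun e => v ∈ e), w v e :=
    Finset.sum_comm' (by intro e v; simp)
  have h3 : ∑ v : V, (if D ≤ degree E v then (0 : ℝ) else 1) =
      Fintype.card V - (Finset.univ.filter (fun v : V => D ≤ degree E v)).card := by
    have h4 : ∀ v : V, (if D ≤ degree E v then (0 : ℝ) else 1) =
        1 - if D ≤ degree E v then 1 else 0 := by intro v; split_ifs <;> simp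
    simp [h4, Finset.sum_sub_distrib]
  rw [← h3]
  rw [h2] at h1
  exact h1.trans (Finset.sum_le_sum fun v _ => hw v)

end Linear

section Meeting

/-- Three families in which every member meets at most two members of each other family, and
without pairwise non-meeting transversals, split into two completely meeting halves. -/
lemma exists_split_of_no_transversal {α : Type*} [DecidableEq α] (R : α → α → Prop)
    [DecidableRel R] (X Y Z : Finset α)
    (hX : 3 ≤ X.card) (hY : 4 ≤ Y.card) (hZ : 4 ≤ Z.card)
    (hXY : ∀ f ∈ X, (Y.filter (fun g => R f g)).card ≤ 2)
    (hXZ : ∀ f ∈ X, (Z.filter (fun h => R f h)).card ≤ 2)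
    (hYX : ∀ g ∈ Y, (X.filter (fun f => R f g)).card ≤ 2)
    (hYZ : ∀ g ∈ Y, (Z.filter (fun h => R g h)).card ≤ 2)
    (hZY : ∀ h ∈ Z, (Y.filter (fun g => R g h)).card ≤ 2)
    (hno : ∀ f ∈ X, ∀ g ∈ Y, ∀ h ∈ Z, R f g ∨ R f h ∨ R g h) :
    ∃ f₁ ∈ X, ∃ f₂ ∈ X, ∃ f₃ ∈ X, ∃ Y₁ ⊆ Y, ∃ Y₂ ⊆ Y, ∃ Z₁ ⊆ Z, ∃ Z₂ ⊆ Z, f₁ ≠ f₂ ∧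
      Y₁.card = 2 ∧ Y₂.card = 2 ∧ Z₁.card = 2 ∧ Z₂.card = 2 ∧
      (∀ g ∈ Y₁, ¬ R f₁ g ∧ ¬ R f₂ g ∧ R f₃ g) ∧ (∀ g ∈ Y₂, R f₁ g ∧ R f₂ g ∧ ¬ R f₃ g) ∧
      (∀ h ∈ Z₁, ¬ R f₁ h ∧ ¬ R f₂ h ∧ R f₃ h) ∧ (∀ h ∈ Z₂, R f₁ h ∧ R f₂ h ∧ ¬ R f₃ h) ∧
      (∀ g ∈ Y₁, ∀ h ∈ Z₁, R g h) ∧ (∀ g ∈ Y₂, ∀ h ∈ Z₂, R g h) ∧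
      (∀ g ∈ Y₁, ∀ h ∈ Z₂, ¬ R g h) ∧ (∀ g ∈ Y₂, ∀ h ∈ Z₁, ¬ R g h) := by
  let By : α → Finset α := fun f => Y.filter (fun g => ¬ R f g)
  let Bz : α → Finset α := fun f => Z.filter (fun h => ¬ R f h)
  have memy : ∀ f g, g ∈ By f ↔ g ∈ Y ∧ ¬ R f g := by simp [By]
  have memz : ∀ f g, g ∈ Bz f ↔ g ∈ Z ∧ ¬ R f g := by simp [Bz]
  have hsy : ∀ f, (Y.filter (fun g => R f g)).card + (By f).card = Y.card :=
    fun f => Finset.card_filter_add_card_filter_not _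
  have hsz : ∀ f, (Z.filter (fun g => R f g)).card + (Bz f).card = Z.card :=
    fun f => Finset.card_filter_add_card_filter_not _
  have hR : ∀ f ∈ X, ∀ g ∈ By f, ∀ h ∈ Bz f, R g h := by
    intro f hf g hg h hh
    rw [memy] at hg
    rw [memz] at hh
    have := hno f hf g hg.1 h hh.1
    tauto
  have ly : ∀ f ∈ X, 2 ≤ (By f).card := fun f hf => by have := hsy f; have := hXY f hf; omega
  have lz : ∀ f ∈ X, 2 ≤ (Bz f).card := fun f hf => by have := hsz f; have := hXZ f hf; omega
  have Nz : ∀ f ∈ X, ∀ g ∈ By f, Bz f = Z.filter (fun h => R g h) := by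
    intro f hf g hg
    refine Finset.eq_of_subset_of_card_le (fun h hh => ?_)
      ((hYZ g ((memy f g).1 hg).1).trans (lz f hf))
    exact Finset.mem_filter.2 ⟨((memz f h).1 hh).1, hR f hf g hg h hh⟩
  have Ny : ∀ f ∈ X, ∀ h ∈ Bz f, By f = Y.filter (fun g => R g h) := by
    intro f hf h hh
    refine Finset.eq_of_subset_of_card_le (fun g hg => ?_)
      ((hZY h ((memz f h).1 hh).1).trans (ly f hf))
    exact Finset.mem_filter.2 ⟨((memy f g).1 hg).1, hR f hf g hg h hh⟩
  have ney : ∀ f ∈ X, (By f).Nonempty := fun f hf => Finset.card_pos.1 (by have := ly f hf; omega)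
  have nez : ∀ f ∈ X, (Bz f).Nonempty := fun f hf => Finset.card_pos.1 (by have := lz f hf; omega)
  have cy : ∀ f ∈ X, (By f).card = 2 := fun f hf => by
    obtain ⟨h, hh⟩ := nez f hf
    have h1 := hZY h ((memz f h).1 hh).1
    rw [← Ny f hf h hh] at h1
    exact le_antisymm h1 (ly f hf)
  have cz : ∀ f ∈ X, (Bz f).card = 2 := fun f hf => by
    obtain ⟨g, hg⟩ := ney f hf
    have h1 := hYZ g ((memy f g).1 hg).1
    rw [← Nz f hf g hg] at h1
    exact le_antisymm h1 (lz f hf)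
  have eqz_of_eqy : ∀ f ∈ X, ∀ f' ∈ X, By f = By f' → Bz f = Bz f' := by
    intro f hf f' hf' heq
    obtain ⟨g, hg⟩ := ney f hf
    rw [Nz f hf g hg, Nz f' hf' g (heq ▸ hg)]
  have eqy_of_eqz : ∀ f ∈ X, ∀ f' ∈ X, Bz f = Bz f' → By f = By f' := by
    intro f hf f' hf' heq
    obtain ⟨g, hg⟩ := nez f hf
    rw [Ny f hf g hg, Ny f' hf' g (heq ▸ hg)]
  have disjy : ∀ f ∈ X, ∀ f' ∈ X, By f ≠ By f' → ∀ g ∈ By f, g ∉ By f' := by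
    intro f hf f' hf' hne g hg hg'
    exact hne (eqy_of_eqz f hf f' hf' (by rw [Nz f hf g hg, Nz f' hf' g hg']))
  have disjz : ∀ f ∈ X, ∀ f' ∈ X, By f ≠ By f' → ∀ g ∈ Bz f, g ∉ Bz f' := by
    intro f hf f' hf' hne g hg hg'
    exact hne (by rw [Ny f hf g hg, Ny f' hf' g hg'])
  suffices hmain : ∃ f₁ ∈ X, ∃ f₂ ∈ X, ∃ f₃ ∈ X, f₁ ≠ f₂ ∧ By f₁ = By f₂ ∧ By f₁ ≠ By f₃ by
    obtain ⟨f₁, h₁, f₂, h₂, f₃, h₃, hne, heq, hne'⟩ := hmain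
    have heqz := eqz_of_eqy f₁ h₁ f₂ h₂ heq
    have d1 := disjy f₁ h₁ f₃ h₃ hne'
    have d2 := disjy f₃ h₃ f₁ h₁ hne'.symm
    have d3 := disjz f₁ h₁ f₃ h₃ hne'
    have d4 := disjz f₃ h₃ f₁ h₁ hne'.symm
    have e2 := memy f₂
    have e4 := memz f₂
    rw [← heq] at e2
    rw [← heqz] at e4
    refine ⟨f₁, h₁, f₂, h₂, f₃, h₃, By f₁, filter_subset _ _, By f₃, filter_subset _ _,
      Bz f₁, filter_subset _ _, Bz f₃, filter_subset _ _, hne, cy _ h₁, cy _ h₃, cz _ h₁, cz _ h₃,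
      ?_, ?_, ?_, ?_, hR _ h₁, hR _ h₃, ?_, ?_⟩
    · intro g hg; have := d1 g hg; grind
    · intro g hg; have := d2 g hg; grind
    · intro g hg; have := d3 g hg; grind
    · intro g hg; have := d4 g hg; grind
    · intro g hg h hh hRgh
      refine d4 h hh ?_
      rw [Nz f₁ h₁ g hg]
      exact Finset.mem_filter.2 ⟨((memz _ _).1 hh).1, hRgh⟩
    · intro g hg h hh hRgh
      refine d3 h hh ?_
      rw [Nz f₃ h₃ g hg]
      exact Finset.mem_filter.2 ⟨((memz _ _).1 hh).1, hRgh⟩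
  obtain ⟨f₀, h₀⟩ : X.Nonempty := Finset.card_pos.1 (by omega)
  have hsplit := Finset.card_filter_add_card_filter_not (s := X) (fun f => By f = By f₀)
  have hI : (X.filter (fun f => By f = By f₀)).card ≤ 2 := by
    obtain ⟨g, hg, hg'⟩ : ∃ g ∈ Y, g ∉ By f₀ :=
      Finset.exists_mem_notMem_of_card_lt_card (by rw [cy f₀ h₀]; omega)
    refine (Finset.card_le_card fun f hf => ?_).trans (hYX g hg)
    rw [Finset.mem_filter] at hf ⊢
    rw [← hf.2, memy] at hg'
    exact ⟨hf.1, by tauto⟩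
  have hII : (X.filter (fun f => ¬ By f = By f₀)).card ≤ 2 := by
    obtain ⟨g, hg⟩ := ney f₀ h₀
    refine (Finset.card_le_card fun f hf => ?_).trans (hYX g ((memy _ _).1 hg).1)
    rw [Finset.mem_filter] at hf ⊢
    have := disjy f₀ h₀ f hf.1 (Ne.symm hf.2) g hg
    rw [memy] at this hg
    exact ⟨hf.1, by tauto⟩
  by_cases hcase : 2 ≤ (X.filter (fun f => By f = By f₀)).card
  · obtain ⟨f₁, m₁, f₂, m₂, hne⟩ := Finset.one_lt_card.1 hcase
    obtain ⟨f₃, m₃⟩ : (X.filter (fun f => ¬ By f = By f₀)).Nonempty :=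
      Finset.card_pos.1 (by omega)
    rw [Finset.mem_filter] at m₁ m₂ m₃
    exact ⟨f₁, m₁.1, f₂, m₂.1, f₃, m₃.1, hne, m₁.2.trans m₂.2.symm, by rw [m₁.2]; exact Ne.symm m₃.2⟩
  · obtain ⟨f₁, m₁, f₂, m₂, hne⟩ := Finset.one_lt_card.1
      (by omega : 1 < (X.filter (fun f => ¬ By f = By f₀)).card)
    rw [Finset.mem_filter] at m₁ m₂
    have comp : ∀ f ∈ X, By f ≠ By f₀ → By f = Y \ By f₀ := by
      intro f hf hne
      refine Finset.eq_of_subset_of_card_le (fun g hg => ?_) ?_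
      · exact Finset.mem_sdiff.2 ⟨((memy _ _).1 hg).1, disjy f hf f₀ h₀ hne g hg⟩
      · have h1 : (Y \ By f₀).card + (By f₀).card = Y.card :=
          Finset.card_sdiff_add_card_eq_card (Finset.filter_subset _ _)
        have h2 := hsy f
        have h3 := hXY f hf
        have h4 := cy f hf
        have h5 := cy f₀ h₀
        omega
    exact ⟨f₁, m₁.1, f₂, m₂.1, f₀, h₀, hne, by rw [comp f₁ m₁.1 m₁.2, comp f₂ m₂.1 m₂.2], m₁.2⟩

end Meeting

section Three

variable {V : Type*} [DecidableEq V] {E : Finset (Finset V)}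

lemma IsLinear.hasCrown_three (hlin : IsLinear 3 E) {e a b c : Finset V} (he : e ∈ E)
    (ha : a ∈ E) (hb : b ∈ E) (hc : c ∈ E) (hae : a ≠ e) (hbe : b ≠ e) (hce : c ≠ e)
    {u v w : V} (hue : u ∈ e) (hua : u ∈ a) (hve : v ∈ e) (hvb : v ∈ b) (hwe : w ∈ e)
    (hwc : w ∈ c) (hab : Disjoint a b) (hac : Disjoint a c) (hbc : Disjoint b c) :
    HasCrown 3 E := by
  have h1 := hlin.inter_card_eq_one_s4 he ha hae.symm hue hua
  have h2 := hlin.inter_card_eq_one_s4 he hb hbe.symm hve hvb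
  have h3 := hlin.inter_card_eq_one_s4 he hc hce.symm hwe hwc
  refine ⟨e, he, ![a, b, c], ?_, ?_, ?_, ?_⟩
  · intro i; fin_cases i <;> simp [ha, hb, hc]
  · intro i; fin_cases i <;> simp [hae, hbe, hce]
  · intro i j hij
    rw [← Finset.disjoint_iff_inter_eq_empty]
    fin_cases i <;> fin_cases j <;> simp_all [disjoint_comm]
  · intro i; fin_cases i <;> simp [h1, h2, h3]

lemma IsLinear.mem_of_three (hlin : IsLinear 3 E) {a : Finset V} (ha : a ∈ E) {p q s t : V}
    (hp : p ∈ a) (hq : q ∈ a) (hs : s ∈ a) (ht : t ∈ a) (hpq : p ≠ q) (hps : p ≠ s)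
    (hqs : q ≠ s) : t = p ∨ t = q ∨ t = s := by
  have h : ({p, q, s} : Finset V) = a := by
    refine Finset.eq_of_subset_of_card_le ?_ ?_
    · intro v; simp only [Finset.mem_insert, Finset.mem_singleton]; grind
    · rw [hlin.1 a ha, Finset.card_eq_three.2 ⟨p, q, s, hpq, hps, hqs, rfl⟩]
  rw [← h] at ht
  simpa using ht

/-- A vertex of one of the two four-cycles left around a degree-five edge has degree three. -/
lemma IsLinear.degree_le_three_s4 (hlin : IsLinear 3 E) (hfree : ¬ HasCrown 3 E)
    {e : Finset V} (he : e ∈ E) {x y z : V} (hx : x ∈ e) (hy : y ∈ e) (hz : z ∈ e)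
    (hxy : x ≠ y) (hxz : x ≠ z) (hyz : y ≠ z) {f₁ f₂ f₃ g₁ g₂ g₃ g₄ h₁ h₂ h₃ h₄ : Finset V}
    (mf₁ : f₁ ∈ otherEdges E e x) (mf₂ : f₂ ∈ otherEdges E e x) (mf₃ : f₃ ∈ otherEdges E e x)
    (mg₁ : g₁ ∈ otherEdges E e y) (mg₂ : g₂ ∈ otherEdges E e y)
    (mg₃ : g₃ ∈ otherEdges E e y) (mg₄ : g₄ ∈ otherEdges E e y)
    (mh₁ : h₁ ∈ otherEdges E e z) (mh₂ : h₂ ∈ otherEdges E e z)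
    (mh₃ : h₃ ∈ otherEdges E e z) (mh₄ : h₄ ∈ otherEdges E e z)
    (hf : f₁ ≠ f₂) (hg : g₁ ≠ g₂) (hg' : g₃ ≠ g₄) (hh : h₁ ≠ h₂) (hh' : h₃ ≠ h₄)
    (f₃g₁ : ¬ Disjoint f₃ g₁) (f₃g₂ : ¬ Disjoint f₃ g₂)
    (f₃h₁ : ¬ Disjoint f₃ h₁) (f₃h₂ : ¬ Disjoint f₃ h₂)
    (f₂g₃ : ¬ Disjoint f₂ g₃) (f₁h₄ : ¬ Disjoint f₁ h₄) (f₂h₃ : ¬ Disjoint f₂ h₃)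
    (g₃h₄ : ¬ Disjoint g₃ h₄) (g₄h₄ : ¬ Disjoint g₄ h₄)
    (f₃g₃ : Disjoint f₃ g₃) (f₃h₃ : Disjoint f₃ h₃) (f₃h₄ : Disjoint f₃ h₄)
    (f₁g₁ : Disjoint f₁ g₁) (f₂h₁ : Disjoint f₂ h₁)
    (f₂h₂ : Disjoint f₂ h₂) (g₁h₄ : Disjoint g₁ h₄) (g₂h₄ : Disjoint g₂ h₄)
    {w : V} (hwy : w ≠ y) (wg : w ∈ g₃) (wh : w ∈ h₃) (wf : w ∈ f₁) : degree E w ≤ 3 := by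
  have avoid : ∀ {p q : V} {f : Finset V}, p ∈ e → q ∈ e → p ≠ q → f ∈ otherEdges E e p →
      q ∉ f := by
    intro p q f hp hq hpq hf hqf
    obtain ⟨h1, h2, h3⟩ := mem_otherEdges.1 hf
    exact h3 (hlin.edge_eq_s4 h1 he hpq h2 hqf hp hq)
  have yf₂ := avoid hx hy hxy mf₂
  have zf₁ := avoid hx hz hxz mf₁
  have zf₂ := avoid hx hz hxz mf₂
  have xg₁ := avoid hy hx hxy.symm mg₁
  have xg₂ := avoid hy hx hxy.symm mg₂
  have xg₃ := avoid hy hx hxy.symm mg₃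
  have zg₁ := avoid hy hz hyz mg₁
  have zg₂ := avoid hy hz hyz mg₂
  have zg₃ := avoid hy hz hyz mg₃
  have zg₄ := avoid hy hz hyz mg₄
  have xh₁ := avoid hz hx hxz.symm mh₁
  have xh₂ := avoid hz hx hxz.symm mh₂
  have xh₃ := avoid hz hx hxz.symm mh₃
  have xh₄ := avoid hz hx hxz.symm mh₄
  have yh₁ := avoid hz hy hyz.symm mh₁
  have yh₂ := avoid hz hy hyz.symm mh₂
  have yh₄ := avoid hz hy hyz.symm mh₄
  obtain ⟨Ef₁, xf₁, -⟩ := mem_otherEdges.1 mf₁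
  obtain ⟨Ef₂, xf₂, -⟩ := mem_otherEdges.1 mf₂
  obtain ⟨Ef₃, xf₃, -⟩ := mem_otherEdges.1 mf₃
  obtain ⟨Eg₁, yg₁, -⟩ := mem_otherEdges.1 mg₁
  obtain ⟨Eg₂, yg₂, -⟩ := mem_otherEdges.1 mg₂
  obtain ⟨Eg₃, yg₃, -⟩ := mem_otherEdges.1 mg₃
  obtain ⟨Eg₄, yg₄, -⟩ := mem_otherEdges.1 mg₄
  obtain ⟨Eh₁, zh₁, -⟩ := mem_otherEdges.1 mh₁
  obtain ⟨Eh₂, zh₂, -⟩ := mem_otherEdges.1 mh₂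
  obtain ⟨Eh₃, zh₃, -⟩ := mem_otherEdges.1 mh₃
  obtain ⟨Eh₄, zh₄, -⟩ := mem_otherEdges.1 mh₄
  have L : ∀ {a b : Finset V}, a ∈ E → b ∈ E → ∀ {u v : V}, u ∈ a → u ∈ b → v ∈ a → v ∈ b →
      a ≠ b → u = v := by
    intro a b ha hb u v h1 h2 h3 h4 hne
    by_contra huv
    exact hne (hlin.edge_eq_s4 ha hb huv h1 h3 h2 h4)
  have hwx : w ≠ x := fun h => xg₃ (h ▸ wg)
  have hwz : w ≠ z := fun h => zg₃ (h ▸ wg)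
  have wh₄ : w ∉ h₄ := fun h => hwz (L Eh₃ Eh₄ wh h zh₃ zh₄ hh')
  have wf₂ : w ∉ f₂ := fun h => hwx (L Ef₁ Ef₂ wf h xf₁ xf₂ hf)
  obtain ⟨w', w'g, w'h⟩ := Finset.not_disjoint_iff.1 g₃h₄
  have hw'w : w ≠ w' := fun h => wh₄ (h ▸ w'h)
  have hw'y : w' ≠ y := fun h => yh₄ (h ▸ w'h)
  have hw'z : w' ≠ z := fun h => zg₃ (h ▸ w'g)
  have hw'x : w' ≠ x := fun h => xg₃ (h ▸ w'g)
  have w'f : w' ∈ f₂ := by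
    obtain ⟨t, tf, tg⟩ := Finset.not_disjoint_iff.1 f₂g₃
    rcases hlin.mem_of_three Eg₃ yg₃ wg w'g tg hwy.symm hw'y.symm hw'w with rfl | rfl | rfl
    · exact absurd tf yf₂
    · exact absurd tf wf₂
    · exact tf
  have f₁ne : f₁ ≠ g₃ := fun h => xg₃ (h ▸ xf₁)
  have w'f₁ : w' ∉ f₁ := fun h => hw'w (L Ef₁ Eg₃ wf wg h w'g f₁ne)
  have w'h₃ : w' ∉ h₃ := fun h => hw'z (L Eh₃ Eh₄ h w'h zh₃ zh₄ hh')
  obtain ⟨u, ug, uh⟩ := Finset.not_disjoint_iff.1 g₄h₄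
  have huy : u ≠ y := fun h => yh₄ (h ▸ uh)
  have huz : u ≠ z := fun h => zg₄ (h ▸ ug)
  have huw' : u ≠ w' := fun h => hw'y (L Eg₃ Eg₄ w'g (h ▸ ug) yg₃ yg₄ hg')
  have huw : u ≠ w := fun h => wh₄ (h ▸ uh)
  have uf : u ∈ f₁ := by
    obtain ⟨t, tf, th⟩ := Finset.not_disjoint_iff.1 f₁h₄
    rcases hlin.mem_of_three Eh₄ zh₄ w'h uh th hw'z.symm huz.symm huw'.symm with rfl | rfl | rfl
    · exact absurd tf zf₁
    · exact absurd tf w'f₁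
    · exact tf
  obtain ⟨u', u'f, u'h⟩ := Finset.not_disjoint_iff.1 f₂h₃
  have hu'w : u' ≠ w := fun h => wf₂ (h ▸ u'f)
  have hu'w' : u' ≠ w' := fun h => w'h₃ (h ▸ u'h)
  have hu'x : u' ≠ x := fun h => xh₃ (h ▸ u'h)
  by_contra! hdeg
  obtain ⟨k, hk, hk'⟩ : ∃ k ∈ E.filter (fun k => w ∈ k), k ∉ ({g₃, h₃, f₁} : Finset (Finset V)) :=
    Finset.exists_mem_notMem_of_card_lt_card (Finset.card_le_three.trans_lt hdeg)
  simp only [Finset.mem_filter, Finset.mem_insert, Finset.mem_singleton, not_or] at hk hk'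
  obtain ⟨Ek, wk⟩ := hk
  obtain ⟨kg, kh, kf⟩ := hk'
  have xk : x ∉ k := fun h => hwx (L Ek Ef₁ wk wf h xf₁ kf)
  have yk : y ∉ k := fun h => hwy (L Ek Eg₃ wk wg h yg₃ kg)
  have zk : z ∉ k := fun h => hwz (L Ek Eh₃ wk wh h zh₃ kh)
  have w'k : w' ∉ k := fun h => hw'w (L Ek Eg₃ wk wg h w'g kg)
  have uk : u ∉ k := fun h => huw (L Ek Ef₁ h uf wk wf kf)
  have u'k : u' ∉ k := fun h => hu'w (L Ek Eh₃ h u'h wk wh kh)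
  have kh₄ : Disjoint k h₄ := by
    refine Finset.disjoint_left.2 fun t tk th => ?_
    rcases hlin.mem_of_three Eh₄ zh₄ w'h uh th hw'z.symm huz.symm huw'.symm with rfl | rfl | rfl
    exacts [zk tk, w'k tk, uk tk]
  have kf₂ : Disjoint k f₂ := by
    refine Finset.disjoint_left.2 fun t tk tf => ?_
    rcases hlin.mem_of_three Ef₂ xf₂ w'f u'f tf hw'x.symm hu'x.symm hu'w'.symm with
      rfl | rfl | rfl
    exacts [xk tk, w'k tk, u'k tk]
  have h₄ne : h₄ ≠ g₃ := fun h => yh₄ (h ▸ yg₃)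
  have g₁ne : g₁ ≠ g₃ := fun h => f₃g₁ (h ▸ f₃g₃)
  have g₂ne : g₂ ≠ g₃ := fun h => f₃g₂ (h ▸ f₃g₃)
  have h₁ne : h₁ ≠ h₃ := fun h => f₃h₁ (h ▸ f₃h₃)
  have h₂ne : h₂ ≠ h₃ := fun h => f₃h₂ (h ▸ f₃h₃)
  have f₃ne : f₃ ≠ f₁ := fun h => f₃g₁ (h ▸ f₁g₁)
  have kg₁ : ¬ Disjoint k g₁ := fun h => hfree <| hlin.hasCrown_three Eg₃ Eg₁ Ek Eh₄ g₁ne kg h₄ne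
    yg₃ yg₁ wg wk w'g w'h h.symm g₁h₄ kh₄
  have kg₂ : ¬ Disjoint k g₂ := fun h => hfree <| hlin.hasCrown_three Eg₃ Eg₂ Ek Eh₄ g₂ne kg h₄ne
    yg₃ yg₂ wg wk w'g w'h h.symm g₂h₄ kh₄
  have kf₃ : ¬ Disjoint k f₃ := fun h => hfree <| hlin.hasCrown_three Ef₁ Ef₃ Ek Eh₄ f₃ne kf
    (fun h => xh₄ (h ▸ xf₁)) xf₁ xf₃ wf wk uf uh h.symm f₃h₄ kh₄
  have kh₁ : ¬ Disjoint k h₁ := fun h => hfree <| hlin.hasCrown_three Eh₃ Eh₁ Ek Ef₂ h₁ne kh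
    (fun h => zf₂ (h ▸ zh₃)) zh₃ zh₁ wh wk u'h u'f h.symm f₂h₁.symm kf₂
  have kh₂ : ¬ Disjoint k h₂ := fun h => hfree <| hlin.hasCrown_three Eh₃ Eh₂ Ek Ef₂ h₂ne kh
    (fun h => zf₂ (h ▸ zh₃)) zh₃ zh₂ wh wk u'h u'f h.symm f₂h₂.symm kf₂
  have final : ∀ {p q : V} {G H : Finset V}, p ∈ k → q ∈ k → p ≠ q → p ∈ f₃ → G ∈ E → H ∈ E →
      q ∈ G → q ∈ H → y ∈ G → y ∉ H → z ∈ H → x ∉ G → x ∉ H → ¬ Disjoint f₃ G →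
      ¬ Disjoint f₃ H → False := by
    intro p q G H pk qk hpq pf EG EH qG qH yG yH zH xG xH hfG hfH
    have pG : p ∉ G := fun h => hpq (L Ek EG pk h qk qG (fun h => yk (h ▸ yG)))
    have pH : p ∉ H := fun h => hpq (L Ek EH pk h qk qH (fun h => zk (h ▸ zH)))
    obtain ⟨c, cf, cG⟩ := Finset.not_disjoint_iff.1 hfG
    obtain ⟨d, df, dH⟩ := Finset.not_disjoint_iff.1 hfH
    rcases hlin.mem_of_three Ef₃ xf₃ pf cf df (fun h => xk (h ▸ pk)) (fun h => xG (h ▸ cG))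
      (fun h => pG (h ▸ cG)) with rfl | rfl | rfl
    · exact xH dH
    · exact pH dH
    · obtain rfl : d = q := L EG EH cG dH qG qH (fun h => yH (h ▸ yG))
      exact hpq (L Ek Ef₃ pk pf qk cf (fun h => xk (h ▸ xf₃)))
  obtain ⟨p, pk, pg⟩ := Finset.not_disjoint_iff.1 kg₁
  obtain ⟨q, qk, qg⟩ := Finset.not_disjoint_iff.1 kg₂
  obtain ⟨t, tk, tf⟩ := Finset.not_disjoint_iff.1 kf₃
  obtain ⟨a, ak, ah⟩ := Finset.not_disjoint_iff.1 kh₁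
  obtain ⟨b, bk, bh⟩ := Finset.not_disjoint_iff.1 kh₂
  have hwp : w ≠ p := fun h => hwy (L Eg₁ Eg₃ (h ▸ pg) wg yg₁ yg₃ g₁ne)
  have hwq : w ≠ q := fun h => hwy (L Eg₂ Eg₃ (h ▸ qg) wg yg₂ yg₃ g₂ne)
  have hwt : t ≠ w := fun h => hwx (L Ef₃ Ef₁ (h ▸ tf) wf xf₃ xf₁ f₃ne)
  have hwa : a ≠ w := fun h => hwz (L Eh₁ Eh₃ (h ▸ ah) wh zh₁ zh₃ h₁ne)
  have hwb : b ≠ w := fun h => hwz (L Eh₂ Eh₃ (h ▸ bh) wh zh₂ zh₃ h₂ne)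
  have hpq : p ≠ q := by
    intro h
    have : p = y := L Eg₁ Eg₂ pg (h ▸ qg) yg₁ yg₂ hg
    exact yk (this ▸ pk)
  have hab : a ≠ b := by
    intro h
    have : a = z := L Eh₁ Eh₂ ah (h ▸ bh) zh₁ zh₂ hh
    exact zk (this ▸ ak)
  have T : ∀ {s : V}, s ∈ k → s ≠ w → s = p ∨ s = q := fun sk hs =>
    (hlin.mem_of_three Ek wk pk qk sk hwp hwq hpq).resolve_left hs
  have ht := T tk hwt
  have ha := T ak hwa
  have hb := T bk hwb
  have hq : q ∈ h₁ ∨ q ∈ h₂ := by grind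
  have hp : p ∈ h₁ ∨ p ∈ h₂ := by grind
  rcases ht with rfl | rfl
  · rcases hq with hq | hq
    · exact final pk qk hpq tf Eg₂ Eh₁ qg hq yg₂ yh₁ zh₁ xg₂ xh₁ f₃g₂ f₃h₁
    · exact final pk qk hpq tf Eg₂ Eh₂ qg hq yg₂ yh₂ zh₂ xg₂ xh₂ f₃g₂ f₃h₂
  · rcases hp with hp | hp
    · exact final qk pk hpq.symm tf Eg₁ Eh₁ pg hp yg₁ yh₁ zh₁ xg₁ xh₁ f₃g₁ f₃h₁
    · exact final qk pk hpq.symm tf Eg₁ Eh₂ pg hp yg₁ yh₂ zh₂ xg₁ xh₂ f₃g₁ f₃h₂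

/-- All vertices of `g` other than `v` have degree at most three. -/
def IsLight (E : Finset (Finset V)) (v : V) (g : Finset V) : Prop :=
  ∀ w ∈ g, w ≠ v → degree E w ≤ 3

lemma IsLinear.exists_isLight (hlin : IsLinear 3 E) (hfree : ¬ HasCrown 3 E)
    {e : Finset V} (he : e ∈ E) {x y z : V} (hx : x ∈ e) (hy : y ∈ e) (hz : z ∈ e)
    (hxy : x ≠ y) (hxz : x ≠ z) (hyz : y ≠ z) (dx : 4 ≤ degree E x) (dy : 5 ≤ degree E y)
    (dz : 5 ≤ degree E z) :
    ∃ g ∈ E, ∃ g' ∈ E, g ≠ g' ∧ y ∈ g ∧ y ∈ g' ∧ IsLight E y g ∧ IsLight E y g' := by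
  have cx := card_otherEdges_add_one he hx
  have cy := card_otherEdges_add_one he hy
  have cz := card_otherEdges_add_one he hz
  have avoid : ∀ {p q : V} {f : Finset V}, p ∈ e → q ∈ e → p ≠ q → f ∈ otherEdges E e p →
      q ∉ f := by
    intro p q f hp hq hpq hf hqf
    obtain ⟨h1, h2, h3⟩ := mem_otherEdges.1 hf
    exact h3 (hlin.edge_eq_s4 h1 he hpq h2 hqf hp hq)
  have meet : ∀ {p q : V}, p ∈ e → q ∈ e → p ≠ q → ∀ f ∈ otherEdges E e p,
      ((otherEdges E e q).filter (fun g => ¬ Disjoint f g)).card ≤ 2 := by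
    intro p q hp hq hpq f hf
    obtain ⟨h1, h2, h3⟩ := mem_otherEdges.1 hf
    exact hlin.card_meeting_le he h1 hp hq hpq h2 h3
  have meet' : ∀ {p q : V}, p ∈ e → q ∈ e → p ≠ q → ∀ f ∈ otherEdges E e p,
      ((otherEdges E e q).filter (fun g => ¬ Disjoint g f)).card ≤ 2 := by
    intro p q hp hq hpq f hf
    simpa only [disjoint_comm] using meet hp hq hpq f hf
  obtain ⟨f₁, mf₁, f₂, mf₂, f₃, mf₃, Y₁, sY₁, Y₂, sY₂, Z₁, sZ₁, Z₂, sZ₂, hf, cY₁, cY₂, cZ₁, cZ₂,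
      fY₁, fY₂, fZ₁, fZ₂, YZ₁, YZ₂, YZ₁₂, YZ₂₁⟩ :=
    exists_split_of_no_transversal (fun a b : Finset V => ¬ Disjoint a b)
      (otherEdges E e x) (otherEdges E e y) (otherEdges E e z) (by omega) (by omega) (by omega)
      (meet hx hy hxy) (meet hx hz hxz) (meet' hy hx hxy.symm) (meet hy hz hyz)
      (meet' hz hy hyz.symm) (by
        intro f hf g hg h hh
        by_contra! hcon
        obtain ⟨a1, a2, a3⟩ := mem_otherEdges.1 hf
        obtain ⟨b1, b2, b3⟩ := mem_otherEdges.1 hg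
        obtain ⟨c1, c2, c3⟩ := mem_otherEdges.1 hh
        exact hfree (hlin.hasCrown_three he a1 b1 c1 a3 b3 c3 hx a2 hy b2 hz c2
          hcon.1 hcon.2.1 hcon.2.2))
  simp only [not_not] at fY₁ fY₂ fZ₁ fZ₂ YZ₁ YZ₂ YZ₁₂ YZ₂₁
  obtain ⟨g₁, g₂, hg, rfl⟩ := Finset.card_eq_two.1 cY₁
  obtain ⟨h₁, h₂, hh, rfl⟩ := Finset.card_eq_two.1 cZ₁
  have mg₁ : g₁ ∈ ({g₁, g₂} : Finset (Finset V)) := by simp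
  have mg₂ : g₂ ∈ ({g₁, g₂} : Finset (Finset V)) := by simp
  have mh₁ : h₁ ∈ ({h₁, h₂} : Finset (Finset V)) := by simp
  have mh₂ : h₂ ∈ ({h₁, h₂} : Finset (Finset V)) := by simp
  have light : ∀ g₃ ∈ Y₂, ∀ g₄ ∈ Y₂, g₃ ≠ g₄ → IsLight E y g₃ := by
    intro g₃ mg₃ g₄ mg₄ hg' w wg hwy
    have core : ∀ F₁ F₂, F₁ ∈ otherEdges E e x → F₂ ∈ otherEdges E e x → F₁ ≠ F₂ →
        (∀ g ∈ ({g₁, g₂} : Finset (Finset V)), Disjoint F₁ g ∧ Disjoint F₂ g) →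
        (∀ h ∈ ({h₁, h₂} : Finset (Finset V)), Disjoint F₁ h ∧ Disjoint F₂ h) →
        (∀ g ∈ Y₂, ¬ Disjoint F₁ g ∧ ¬ Disjoint F₂ g) →
        (∀ h ∈ Z₂, ¬ Disjoint F₁ h ∧ ¬ Disjoint F₂ h) →
        ∀ h₃ ∈ Z₂, ∀ h₄ ∈ Z₂, h₃ ≠ h₄ → w ∈ h₃ → w ∈ F₁ → degree E w ≤ 3 := by
      intro F₁ F₂ mF₁ mF₂ hF A B C D h₃ mh₃ h₄ mh₄ hh' wh wf
      exact hlin.degree_le_three_s4 hfree he hx hy hz hxy hxz hyz mF₁ mF₂ mf₃ (sY₁ mg₁) (sY₁ mg₂)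
        (sY₂ mg₃) (sY₂ mg₄) (sZ₁ mh₁) (sZ₁ mh₂) (sZ₂ mh₃) (sZ₂ mh₄) hF hg hg' hh hh'
        (fY₁ _ mg₁).2.2 (fY₁ _ mg₂).2.2 (fZ₁ _ mh₁).2.2 (fZ₁ _ mh₂).2.2
        (C _ mg₃).2 (D _ mh₄).1 (D _ mh₃).2 (YZ₂ _ mg₃ _ mh₄) (YZ₂ _ mg₄ _ mh₄)
        (fY₂ _ mg₃).2.2 (fZ₂ _ mh₃).2.2 (fZ₂ _ mh₄).2.2 (A _ mg₁).1 (B _ mh₁).2 (B _ mh₂).2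
        (YZ₁₂ _ mg₁ _ mh₄) (YZ₁₂ _ mg₂ _ mh₄) hwy wg wh wf
    have cover : ∀ {p : V}, p ∈ e → p ≠ y → ∀ a ∈ otherEdges E e p, ∀ b ∈ otherEdges E e p,
        a ≠ b → ¬ Disjoint a g₃ → ¬ Disjoint b g₃ → w ∈ a ∨ w ∈ b := by
      intro p hp hpy a ha b hb hab hag hbg
      obtain ⟨s, sa, sg⟩ := Finset.not_disjoint_iff.1 hag
      obtain ⟨t, tb, tg⟩ := Finset.not_disjoint_iff.1 hbg
      obtain ⟨Ea, pa, -⟩ := mem_otherEdges.1 ha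
      obtain ⟨Eb, pb, -⟩ := mem_otherEdges.1 hb
      obtain ⟨Eg, yg, -⟩ := mem_otherEdges.1 (sY₂ mg₃)
      have ya := avoid hp hy hpy ha
      have yb := avoid hp hy hpy hb
      have pg := avoid hy hp hpy.symm (sY₂ mg₃)
      have hst : s ≠ t := by
        rintro rfl
        exact hab (hlin.edge_eq_s4 Ea Eb (fun h : s = p => pg (h ▸ sg)) sa pa tb pb)
      rcases hlin.mem_of_three Eg yg sg tg wg (fun h => ya (h ▸ sa)) (fun h => yb (h ▸ tb)) hst
        with rfl | rfl | rfl
      · exact absurd rfl hwy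
      · exact Or.inl sa
      · exact Or.inr tb
    obtain ⟨h₃, mh₃, h₄, mh₄, hh'⟩ := Finset.one_lt_card.1 (by omega : 1 < Z₂.card)
    have hwf := cover hx hxy f₁ mf₁ f₂ mf₂ hf (fY₂ _ mg₃).1 (fY₂ _ mg₃).2.1
    have hwh := cover hz hyz.symm h₃ (sZ₂ mh₃) h₄ (sZ₂ mh₄) hh'
      (fun h => YZ₂ _ mg₃ _ mh₃ h.symm) (fun h => YZ₂ _ mg₃ _ mh₄ h.symm)
    have core₁ := core f₁ f₂ mf₁ mf₂ hf (fun g m => ⟨(fY₁ g m).1, (fY₁ g m).2.1⟩)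
      (fun h m => ⟨(fZ₁ h m).1, (fZ₁ h m).2.1⟩) (fun g m => ⟨(fY₂ g m).1, (fY₂ g m).2.1⟩)
      (fun h m => ⟨(fZ₂ h m).1, (fZ₂ h m).2.1⟩)
    have core₂ := core f₂ f₁ mf₂ mf₁ hf.symm (fun g m => ⟨(fY₁ g m).2.1, (fY₁ g m).1⟩)
      (fun h m => ⟨(fZ₁ h m).2.1, (fZ₁ h m).1⟩) (fun g m => ⟨(fY₂ g m).2.1, (fY₂ g m).1⟩)
      (fun h m => ⟨(fZ₂ h m).2.1, (fZ₂ h m).1⟩)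
    rcases hwf with wf | wf <;> rcases hwh with wh | wh
    · exact core₁ h₃ mh₃ h₄ mh₄ hh' wh wf
    · exact core₁ h₄ mh₄ h₃ mh₃ hh'.symm wh wf
    · exact core₂ h₃ mh₃ h₄ mh₄ hh' wh wf
    · exact core₂ h₄ mh₄ h₃ mh₃ hh'.symm wh wf
  obtain ⟨g₃, mg₃, g₄, mg₄, hg'⟩ := Finset.one_lt_card.1 (by omega : 1 < Y₂.card)
  obtain ⟨E₃, y₃, -⟩ := mem_otherEdges.1 (sY₂ mg₃)
  obtain ⟨E₄, y₄, -⟩ := mem_otherEdges.1 (sY₂ mg₄)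
  exact ⟨g₃, E₃, g₄, E₄, hg', y₃, y₄, light g₃ mg₃ g₄ mg₄ hg', light g₄ mg₄ g₃ mg₃ hg'.symm⟩

open Classical in
/-- The number of light edges at `v`. -/
noncomputable def lightDegree (E : Finset (Finset V)) (v : V) : ℕ :=
  (E.filter (fun g => v ∈ g ∧ IsLight E v g)).card

open Classical in
/-- The weight given by `v` to its edge `e`: vertices of degree five with two light edges give
nothing to their light edges and more to the other ones. -/
noncomputable def edgeWeight (E : Finset (Finset V)) (v : V) (e : Finset V) : ℝ :=
  if 6 ≤ degree E v then 0
  else if degree E v = 5 ∧ 2 ≤ lightDegree E v then (if IsLight E v e then 0 else 1 / 3)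
  else 1 / degree E v

lemma edgeWeight_nonneg (v : V) (e : Finset V) : 0 ≤ edgeWeight E v e := by
  unfold edgeWeight
  split_ifs <;> positivity

lemma sum_edgeWeight_le (v : V) :
    ∑ e ∈ E.filter (fun e => v ∈ e), edgeWeight E v e ≤ if 6 ≤ degree E v then 0 else 1 := by
  classical
  by_cases h6 : 6 ≤ degree E v
  · simp [edgeWeight, h6]
  by_cases h5 : degree E v = 5 ∧ 2 ≤ lightDegree E v
  · have hcard := Finset.card_filter_add_card_filter_not (s := E.filter (fun e => v ∈ e))
      (fun e => IsLight E v e)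
    rw [Finset.filter_filter] at hcard
    have hl : 2 ≤ (E.filter (fun g => v ∈ g ∧ IsLight E v g)).card := h5.2
    have hd : (E.filter (fun e => v ∈ e)).card = 5 := h5.1
    have h3 : ((E.filter (fun e => v ∈ e)).filter (fun e => ¬ IsLight E v e)).card ≤ 3 := by
      omega
    have h3' : (((E.filter (fun e => v ∈ e)).filter (fun e => ¬ IsLight E v e)).card : ℝ) ≤ 3 := by
      exact_mod_cast h3
    have hw : ∀ e, edgeWeight E v e = if IsLight E v e then 0 else 1 / 3 := fun e => by
      rw [edgeWeight, if_neg h6, if_pos h5]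
    simp only [hw, if_neg h6]
    rw [Finset.sum_ite, Finset.sum_const_zero, zero_add, Finset.sum_const, nsmul_eq_mul]
    linarith
  · simp only [edgeWeight, h6, h5, if_false, Finset.sum_const, nsmul_eq_mul]
    change (degree E v : ℝ) * (1 / degree E v) ≤ 1
    rw [mul_one_div]
    exact div_self_le_one _

lemma IsLinear.two_thirds_le_sum_edgeWeight (hlin : IsLinear 3 E) (hfree : ¬ HasCrown 3 E)
    {e : Finset V} (he : e ∈ E) : (2 : ℝ) / 3 ≤ ∑ v ∈ e, edgeWeight E v e := by
  classical
  by_cases hlight : ∃ y ∈ e, degree E y = 5 ∧ IsLight E y e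
  · obtain ⟨y, hy, -, hl⟩ := hlight
    have hc : (e.erase y).card = 2 := by rw [Finset.card_erase_of_mem hy, hlin.1 e he]
    have h1 : (e.erase y).card • (1 / 3 : ℝ) ≤ ∑ v ∈ e.erase y, edgeWeight E v e := by
      refine Finset.card_nsmul_le_sum _ _ _ fun v hv => ?_
      obtain ⟨hvy, hve⟩ := Finset.mem_erase.1 hv
      have hd := hl v hve hvy
      have hp : 0 < degree E v := degree_pos he hve
      rw [edgeWeight, if_neg (by omega), if_neg (by omega)]
      exact one_div_le_one_div_of_le (by exact_mod_cast hp) (by exact_mod_cast hd)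
    have h2 := Finset.sum_le_sum_of_subset_of_nonneg (Finset.erase_subset y e)
      (fun v _ _ => edgeWeight_nonneg (E := E) v e)
    rw [hc] at h1
    norm_num at h1 h2 ⊢
    linarith
  push Not at hlight
  have hge : ∀ v ∈ e, (if 6 ≤ degree E v then 0 else (1 : ℝ) / degree E v) ≤
      edgeWeight E v e := by
    intro v hv
    unfold edgeWeight
    split_ifs with h1 h2 h3
    · rfl
    · exact absurd h3 (hlight v hv h2.1)
    · rw [h2.1]; norm_num
    · rfl
  by_cases hhigh : ∃ y ∈ e, 6 ≤ degree E y
  · obtain ⟨y, hy, hd⟩ := hhigh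
    have h1 := hlin.weight_of_high le_rfl hfree he hy (by simpa using hd)
    norm_num at h1
    refine le_trans ?_ (Finset.sum_le_sum hge)
    norm_num
    exact h1
  push Not at hhigh
  obtain ⟨a, b, c, hab, hac, hbc, rfl⟩ := Finset.card_eq_three.1 (hlin.1 e he)
  have ma : a ∈ ({a, b, c} : Finset V) := by simp
  have mb : b ∈ ({a, b, c} : Finset V) := by simp
  have mc : c ∈ ({a, b, c} : Finset V) := by simp
  have hsum : ∑ v ∈ ({a, b, c} : Finset V), edgeWeight E v {a, b, c} =
      edgeWeight E a {a, b, c} + edgeWeight E b {a, b, c} + edgeWeight E c {a, b, c} := by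
    rw [Finset.sum_insert (by simp [hab, hac]), Finset.sum_insert (by simp [hbc]),
      Finset.sum_singleton, add_assoc]
  rw [hsum]
  have low : ∀ (k : ℕ), ∀ v ∈ ({a, b, c} : Finset V), degree E v ≤ k →
      (1 : ℝ) / k ≤ edgeWeight E v {a, b, c} := by
    intro k v hv hk
    refine le_trans ?_ (hge v hv)
    rw [if_neg (by have := hhigh v hv; omega)]
    have hp : 0 < degree E v := degree_pos he hv
    exact one_div_le_one_div_of_le (by exact_mod_cast hp) (by exact_mod_cast hk)
  have rich : ∀ x y z, x ∈ ({a, b, c} : Finset V) → y ∈ ({a, b, c} : Finset V) →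
      z ∈ ({a, b, c} : Finset V) → x ≠ y → x ≠ z → y ≠ z → 4 ≤ degree E x → 5 ≤ degree E y →
      5 ≤ degree E z → (1 : ℝ) / 3 ≤ edgeWeight E y {a, b, c} := by
    intro x y z hx hy hz hxy hxz hyz dx dy dz
    obtain ⟨g, hg, g', hg', hne, yg, yg', lg, lg'⟩ :=
      hlin.exists_isLight hfree he hx hy hz hxy hxz hyz dx dy dz
    have h5 : degree E y = 5 := le_antisymm (by have := hhigh y hy; omega) dy
    have hl : 2 ≤ lightDegree E y :=
      Finset.one_lt_card.2 ⟨g, by simp [hg, yg, lg], g', by simp [hg', yg', lg'], hne⟩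
    rw [edgeWeight, if_neg (by omega), if_pos ⟨h5, hl⟩, if_neg (hlight y hy h5)]
  have a5 := low 5 a ma (by have := hhigh a ma; omega)
  have b5 := low 5 b mb (by have := hhigh b mb; omega)
  have c5 := low 5 c mc (by have := hhigh c mc; omega)
  have a3 := low 3 a ma
  have b3 := low 3 b mb
  have c3 := low 3 c mc
  have a4 := low 4 a ma
  have b4 := low 4 b mb
  have c4 := low 4 c mc
  norm_num at a3 b3 c3 a4 b4 c4 a5 b5 c5
  by_cases h3 : degree E a ≤ 3 ∨ degree E b ≤ 3 ∨ degree E c ≤ 3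
  · rcases h3 with h | h | h
    · linarith [a3 h]
    · linarith [b3 h]
    · linarith [c3 h]
  push Not at h3
  rcases Nat.lt_or_ge 4 (degree E a) with ha | ha <;>
    rcases Nat.lt_or_ge 4 (degree E b) with hb | hb <;>
    rcases Nat.lt_or_ge 4 (degree E c) with hc | hc
  · have h1 := rich c a b mc ma mb hac.symm hbc.symm hab h3.2.2 ha hb
    have h2 := rich c b a mc mb ma hbc.symm hac.symm hab.symm h3.2.2 hb ha
    linarith
  · have h1 := rich c a b mc ma mb hac.symm hbc.symm hab h3.2.2 ha hb
    have h2 := rich c b a mc mb ma hbc.symm hac.symm hab.symm h3.2.2 hb ha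
    linarith
  · have h1 := rich b a c mb ma mc hab.symm hbc hac h3.2.1 ha hc
    have h2 := rich b c a mb mc ma hbc hab.symm hac.symm h3.2.1 hc ha
    linarith
  · linarith [b4 hb, c4 hc]
  · have h1 := rich a b c ma mb mc hab hac hbc h3.1 hb hc
    have h2 := rich a c b ma mc mb hac hab hbc.symm h3.1 hc hb
    linarith
  · linarith [a4 ha, c4 hc]
  · linarith [a4 ha, b4 hb]
  · linarith [a4 ha, b4 hb]

end Three

lemma IsLinear.weight_of_four_le {V : Type*} [DecidableEq V] {r : ℕ} {E : Finset (Finset V)}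
    (hr : 4 ≤ r) (hlin : IsLinear r E) (hfree : ¬ HasCrown r E) {e : Finset V} (he : e ∈ E) :
    ((r : ℝ) - 1) / (r * (r - 2)) ≤
      ∑ v ∈ e, if (r - 1) ^ 2 + 2 ≤ degree E v then 0 else (1 : ℝ) / degree E v := by
  by_cases hhigh : ∃ y ∈ e, (r - 1) ^ 2 + 2 ≤ degree E y
  · obtain ⟨y, hy, hd⟩ := hhigh
    exact hlin.weight_of_high (by omega) hfree he hy hd
  push Not at hhigh
  have h1 : e.card • ((1 : ℝ) / ((r - 1) ^ 2 + 1)) ≤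
      ∑ v ∈ e, if (r - 1) ^ 2 + 2 ≤ degree E v then 0 else (1 : ℝ) / degree E v := by
    refine Finset.card_nsmul_le_sum _ _ _ fun v hv => ?_
    have h2 := hhigh v hv
    rw [if_neg (by omega)]
    have hp : 0 < degree E v := degree_pos he hv
    refine one_div_le_one_div_of_le (by exact_mod_cast hp) ?_
    have h3 : ((degree E v : ℕ) : ℝ) ≤ (((r - 1) ^ 2 + 1 : ℕ) : ℝ) := by
      exact_mod_cast (by omega : degree E v ≤ (r - 1) ^ 2 + 1)
    rwa [Nat.cast_add, Nat.cast_pow, Nat.cast_sub (by omega), Nat.cast_one] at h3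
  refine le_trans ?_ h1
  have hr' : (4 : ℝ) ≤ r := by exact_mod_cast hr
  rw [hlin.1 e he, nsmul_eq_mul, mul_one_div, div_le_div_iff₀ (by nlinarith) (by positivity)]
  nlinarith

/-- Main theorem: a `{C_{1r}, C*}`-free linear `r`-graph on `n` vertices with `s`
vertices of degree at least `(r-1)^2 + 2` has at most `r(r-2)(n-s)/(r-1)` edges. -/
theorem crown_cstar_free_upper_bound {V : Type*} [DecidableEq V] [Fintype V]
    (r : ℕ) (hr : 3 ≤ r) (E : Finset (Finset V)) (hlin : IsLinear r E)
    (hfree₁ : ¬ HasCrown r E) (hfree₂ : ¬ HasCStar r E)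
    (s : ℕ) (hs : s = (Finset.univ.filter (fun v : V => (r - 1) ^ 2 + 2 ≤ degree E v)).card) :
    (E.card : ℝ) ≤ r * (r - 2) * ((Fintype.card V : ℝ) - s) / (r - 1) := by 
  have hr' : (3 : ℝ) ≤ r := by exact_mod_cast hr
  have key : ((r : ℝ) - 1) / (r * (r - 2)) * E.card ≤ Fintype.card V - s := by
    subst hs
    rcases Nat.lt_or_ge 3 r with h4 | h3
    · refine card_mul_le_of_weight ((r - 1) ^ 2 + 2) _
        (fun v _ => if (r - 1) ^ 2 + 2 ≤ degree E v then 0 else (1 : ℝ) / degree E v) ?_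
        (fun e he => hlin.weight_of_four_le h4 hfree₁ he)
      intro v
      split_ifs
      · simp
      · rw [Finset.sum_const, nsmul_eq_mul]
        change (degree E v : ℝ) * (1 / degree E v) ≤ 1
        rw [mul_one_div]
        exact div_self_le_one _
    · obtain rfl : r = 3 := le_antisymm h3 hr
      refine card_mul_le_of_weight ((3 - 1) ^ 2 + 2) _ (edgeWeight E) sum_edgeWeight_le
        (fun e he => le_trans ?_ (hlin.two_thirds_le_sum_edgeWeight hfree₁ he))
      norm_num
  rw [div_mul_eq_mul_div, div_le_iff₀ (by nlinarith)] at key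
  rw [le_div_iff₀ (by linarith)]
  linarith
end
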